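/- arXiv:0901.2621 — 14 statements merged into one kernel-verified Lean document; each statement's English description precedes it below -/
import Mathlib

section
/- Let X be a connected, locally finite T0 Alexandroff space. Then X is infinite if and only if there exists a subset A of X such that A ⊆ min(X) ∪ max(X) (A is spanning), A with the induced specialization order is order-isomorphic to the Khalimsky half-line, and A is isometric in X, i.e. d_A(x,y) = d_X(x,y) for all x,y ∈ A. -/
/-- Specialization order on a topological space: `x ≤ y` iff `y ∈ closure {x}`. -/
def specLE {X : Type*} [TopologicalSpace X] (x y : X) : Prop := y ∈ closure ({x} : Set X)

/-- Comparability in the specialization order. -/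
def specComp {X : Type*} [TopologicalSpace X] (x y : X) : Prop := specLE x y ∨ specLE y x

/-- `IsSPathIn S x y n`: there is an s-path of length `n` from `x` to `y` whose points lie
in `S` (pairwise distinct points, consecutive points comparable). -/
def IsSPathIn {X : Type*} [TopologicalSpace X] (S : Set X) (x y : X) (n : ℕ) : Prop :=
  ∃ p : Fin (n + 1) → X, Function.Injective p ∧ (∀ i, p i ∈ S) ∧
    p 0 = x ∧ p (Fin.last n) = y ∧ ∀ i : Fin n, specComp (p i.castSucc) (p i.succ)

/-- `sDist S x y`: minimal length of an s-path from `x` to `y` within `S` (`∞` if none). -/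
noncomputable def sDist {X : Type*} [TopologicalSpace X] (S : Set X) (x y : X) : ℕ∞ :=
  sInf {m : ℕ∞ | ∃ n : ℕ, m = (n : ℕ∞) ∧ IsSPathIn S x y n}

/-- The order of the Khalimsky half-line on `ℕ`: `n ⊑ m` iff `n = m`, or `|n - m| = 1`
and `m` is even. -/
def khalimskyLE (n m : ℕ) : Prop := n = m ∨ ((n + 1 = m ∨ m + 1 = n) ∧ Even m)

/-!
Kőnig's lemma, applied to the order `u ≤ v` iff some geodesic from the root `r` to `v` passes
through `u`, gives a geodesic ray from any vertex of the comparability graph. Two points of the ray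
at distance `2` are incomparable, so by transitivity the directions of consecutive comparisons
alternate: a ray starting at a maximal point goes down and up in turn, which is the Khalimsky
pattern. Pushing its even points up to maximal elements and its odd points down to minimal ones
keeps the pattern, and it keeps the ray geodesic since the new `n`-th point is still comparable to
the old `(n + 1)`-st one.
-/

section GeodesicRay

variable {V : Type*} {G : SimpleGraph V} {x : ℕ → V}

/-- A geodesic ray in a graph: an infinite path, indexed by `ℕ`, along which the graph distance is
the difference of the indices. -/
def IsGeodesicRay (G : SimpleGraph V) (x : ℕ → V) : Prop :=
  ∀ i k, G.dist (x i) (x (i + k)) = k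

theorem IsGeodesicRay.adj_iff (hx : IsGeodesicRay G x) {i j : ℕ} :
    G.Adj (x i) (x j) ↔ i + 1 = j ∨ j + 1 = i := by
  wlog hij : i ≤ j generalizing i j
  · rw [G.adj_comm, this (le_of_not_ge hij), or_comm]
  obtain ⟨k, rfl⟩ := Nat.exists_eq_add_of_le hij
  rw [← SimpleGraph.dist_eq_one_iff_adj, hx i k]
  lia

theorem IsGeodesicRay.injective (hx : IsGeodesicRay G x) : Function.Injective x := by
  intro i j hij
  wlog hle : i ≤ j generalizing i j
  · exact (this hij.symm (le_of_not_ge hle)).symm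
  obtain ⟨k, rfl⟩ := Nat.exists_eq_add_of_le hle
  have hk : G.dist (x i) (x (i + k)) = k := hx i k
  rw [← hij, SimpleGraph.dist_self] at hk
  lia

theorem isGeodesicRay_of_dist_le_one_of_le_dist (hG : G.Connected)
    (hstep : ∀ n, G.dist (x n) (x (n + 1)) ≤ 1) (hzero : ∀ n, n ≤ G.dist (x 0) (x n)) :
    IsGeodesicRay G x := by
  have hle (i k : ℕ) : G.dist (x i) (x (i + k)) ≤ k := by
    induction k with
    | zero => simp
    | succ k ih => exact hG.dist_triangle.trans (add_le_add ih (hstep (i + k)))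
  intro i k
  have hik : G.dist (x 0) (x (i + k)) ≤ G.dist (x 0) (x i) + G.dist (x i) (x (i + k)) :=
    hG.dist_triangle
  have hi : G.dist (x 0) (x i) ≤ i := by simpa only [Nat.zero_add] using hle 0 i
  have := hzero (i + k)
  have := hle i k
  lia

/-- The geodesic order of a connected graph rooted at `r`: `u ≤ v` iff `u` lies on a geodesic from
`r` to `v`. -/
abbrev geodesicOrder (hG : G.Connected) (r : V) : PartialOrder V where
  le u v := G.dist r u + G.dist u v = G.dist r v
  le_refl u := by simp
  le_trans u v w huv hvw := by
    have huw : G.dist u w ≤ G.dist u v + G.dist v w := hG.dist_triangle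
    have hrw : G.dist r w ≤ G.dist r u + G.dist u w := hG.dist_triangle
    lia
  le_antisymm u v huv hvu := by
    rw [G.dist_comm (u := v)] at hvu
    exact hG.dist_eq_zero_iff.1 (by lia)

theorem dist_lt_dist_of_geodesicOrder_lt (hG : G.Connected) {r u v : V}
    (huv : (geodesicOrder hG r).lt u v) : G.dist r u < G.dist r v := by
  let := geodesicOrder hG r
  have hdist : G.dist r u + G.dist u v = G.dist r v := huv.le
  have : 0 < G.dist u v := hG.pos_dist_of_ne huv.ne
  lia

theorem exists_adj_of_geodesicOrder_lt (hG : G.Connected) {r u v : V}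
    (huv : (geodesicOrder hG r).lt u v) :
    ∃ w, G.Adj u w ∧ (geodesicOrder hG r).lt u w ∧ (geodesicOrder hG r).le w v := by
  let := geodesicOrder hG r
  have hdist : G.dist r u + G.dist u v = G.dist r v := huv.le
  obtain ⟨p, hp⟩ := hG.exists_walk_length_eq_dist u v
  cases p with
  | nil => exact absurd huv (lt_irrefl u)
  | @cons _ w _ huw q =>
    rw [SimpleGraph.Walk.length_cons] at hp
    have hq : G.dist w v ≤ q.length := SimpleGraph.dist_le q
    have huw_one : G.dist u w = 1 := SimpleGraph.dist_eq_one_iff_adj.2 huw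
    have hrw : G.dist r w ≤ G.dist r u + G.dist u w := hG.dist_triangle
    have hrv : G.dist r v ≤ G.dist r w + G.dist w v := hG.dist_triangle
    have huw_le : u ≤ w := show G.dist r u + G.dist u w = G.dist r w by lia
    exact ⟨w, huw, huw_le.lt_of_ne huw.ne, show G.dist r w + G.dist w v = G.dist r v by lia⟩

theorem adj_of_geodesicOrder_covBy (hG : G.Connected) {r u v : V}
    (huv : @CovBy V (geodesicOrder hG r).toLT u v) : G.Adj u v := by
  let := geodesicOrder hG r
  obtain ⟨w, huw, hlt, hle⟩ := exists_adj_of_geodesicOrder_lt hG huv.lt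
  exact hle.eq_of_not_lt (huv.2 hlt) ▸ huw

/-- The grading of the geodesic order by the distance to the root, through which Kőnig's lemma for
graded orders yields rays along which this distance is the index. -/
noncomputable abbrev geodesicGradeMinOrder (hG : G.Connected) (r : V) :
    @GradeMinOrder ℕ V _ (geodesicOrder hG r).toPreorder :=
  letI := geodesicOrder hG r
  { grade := G.dist r
    grade_strictMono := fun _ _ huv => dist_lt_dist_of_geodesicOrder_lt hG huv
    covBy_grade := fun u v huv => by
      have hdist : G.dist r u + G.dist u v = G.dist r v := huv.le
      have hone := SimpleGraph.dist_eq_one_iff_adj.2 (adj_of_geodesicOrder_covBy hG huv)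
      rw [Nat.covBy_iff_add_one_eq]
      lia
    isMin_grade := fun u hu => by
      have hr : r ≤ u := show G.dist r r + G.dist r u = G.dist r u by simp
      rw [← hu.eq_of_le hr, SimpleGraph.dist_self]
      exact isMin_bot }

theorem exists_isGeodesicRay [Infinite V] (hG : G.Connected)
    (hfin : ∀ v, (G.neighborSet v).Finite) (r : V) :
    ∃ x : ℕ → V, IsGeodesicRay G x ∧ x 0 = r := by
  let := geodesicOrder hG r
  let := geodesicGradeMinOrder hG r
  let : OrderBot V :=
    { bot := r, bot_le := fun u => show G.dist r r + G.dist r u = G.dist r u by simp }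
  have hcov (u : V) : {v | u ⋖ v}.Finite :=
    (hfin u).subset fun v huv => adj_of_geodesicOrder_covBy hG huv
  obtain ⟨f, hf_zero, -, hf_grade⟩ :=
    GradeMinOrder.exists_nat_orderEmbedding_of_forall_covby_finite hcov
  refine ⟨f, fun i k => ?_, hf_zero⟩
  have hle : G.dist r (f i) + G.dist (f i) (f (i + k)) = G.dist r (f (i + k)) :=
    f.monotone (Nat.le_add_right i k)
  have hi : G.dist r (f i) = i := hf_grade i
  have hik : G.dist r (f (i + k)) = i + k := hf_grade (i + k)
  lia

end GeodesicRay

section Khalimsky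

variable {P : Type*}

/-- The comparability graph of an order: two distinct points are adjacent when they are
comparable. -/
abbrev comparabilityGraph (P : Type*) [LE P] : SimpleGraph P :=
  SimpleGraph.fromRel (· ≤ ·)

/-- Order-preserving maps from the Khalimsky half-line. As `khalimskyLE` is not an order instance
on `ℕ`, this is not an instance of `Monotone`. -/
def IsKhalimskyMonotone [LE P] (x : ℕ → P) : Prop :=
  ∀ ⦃n m⦄, khalimskyLE n m → x n ≤ x m

theorem isKhalimskyMonotone_iff [Preorder P] {x : ℕ → P} :
    IsKhalimskyMonotone x ↔
      ∀ n, (Even n → x (n + 1) ≤ x n) ∧ (Odd n → x n ≤ x (n + 1)) := by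
  constructor
  · exact fun hx n => ⟨fun hn => hx (Or.inr ⟨Or.inr rfl, hn⟩),
      fun hn => hx (Or.inr ⟨Or.inl rfl, hn.add_one⟩)⟩
  · rintro hx n m (rfl | ⟨rfl | rfl, hm⟩)
    · exact le_rfl
    · exact (hx n).2 (by simpa [Nat.even_add_one] using hm)
    · exact (hx m).1 hm

section Preorder

variable [Preorder P] {x e : ℕ → P}

theorem dist_comparabilityGraph_le_one {a b : P} (hab : a ≤ b ∨ b ≤ a) :
    (comparabilityGraph P).dist a b ≤ 1 := by
  by_cases hne : a = b
  · simp [hne]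
  · have hadj : (comparabilityGraph P).Adj a b := ⟨hne, hab⟩
    exact (SimpleGraph.dist_eq_one_iff_adj.2 hadj).le

theorem IsGeodesicRay.isKhalimskyMonotone (hx : IsGeodesicRay (comparabilityGraph P) x)
    (hzero : IsMax (x 0)) : IsKhalimskyMonotone x := by
  have hcomp (n : ℕ) : x n ≤ x (n + 1) ∨ x (n + 1) ≤ x n := (hx.adj_iff.2 (Or.inl rfl)).2
  have hincomp (n : ℕ) : ¬(x n ≤ x (n + 2) ∨ x (n + 2) ≤ x n) := fun h => by
    have hadj : (comparabilityGraph P).Adj (x n) (x (n + 2)) := ⟨hx.injective.ne (by lia), h⟩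
    have := hx.adj_iff.1 hadj
    lia
  rw [isKhalimskyMonotone_iff]
  intro n
  induction n with
  | zero => exact ⟨fun _ => (hcomp 0).elim (fun h => hzero h) id, by simp⟩
  | succ n ih =>
    refine ⟨fun hn => (hcomp (n + 1)).resolve_left fun hup => ?_,
      fun hn => (hcomp (n + 1)).resolve_right fun hdown => ?_⟩
    · have hodd : Odd n := by simpa [Nat.even_add_one] using hn
      exact hincomp n (Or.inl ((ih.2 hodd).trans hup))
    · have heven : Even n := by simpa [Nat.odd_add_one] using hn
      exact hincomp n (Or.inr (hdown.trans (ih.1 heven)))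

theorem IsKhalimskyMonotone.of_even_ge_of_odd_le (hx : IsKhalimskyMonotone x)
    (heven : ∀ n, Even n → x n ≤ e n) (hodd : ∀ n, Odd n → e n ≤ x n) :
    IsKhalimskyMonotone e := by
  rw [isKhalimskyMonotone_iff] at hx ⊢
  exact fun n => ⟨fun hn => (hodd _ hn.add_one).trans (((hx n).1 hn).trans (heven n hn)),
    fun hn => (hodd n hn).trans (((hx n).2 hn).trans (heven _ hn.add_one))⟩

theorem IsGeodesicRay.of_even_ge_of_odd_le (hG : (comparabilityGraph P).Connected)
    (hx : IsGeodesicRay (comparabilityGraph P) x) (hmono : IsKhalimskyMonotone x)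
    (heven : ∀ n, Even n → x n ≤ e n) (hodd : ∀ n, Odd n → e n ≤ x n) (hzero : e 0 = x 0) :
    IsGeodesicRay (comparabilityGraph P) e := by
  have hmono_e := isKhalimskyMonotone_iff.1 (hmono.of_even_ge_of_odd_le heven hodd)
  rw [isKhalimskyMonotone_iff] at hmono
  refine isGeodesicRay_of_dist_le_one_of_le_dist hG
    (fun n => dist_comparabilityGraph_le_one ?_) fun n => ?_
  · exact (Nat.even_or_odd n).elim (fun hn => Or.inr ((hmono_e n).1 hn))
      fun hn => Or.inl ((hmono_e n).2 hn)
  · have hnext : e n ≤ x (n + 1) ∨ x (n + 1) ≤ e n :=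
      (Nat.even_or_odd n).elim (fun hn => Or.inr (((hmono n).1 hn).trans (heven n hn)))
        fun hn => Or.inl ((hodd n hn).trans ((hmono n).2 hn))
    have hdist : (comparabilityGraph P).dist (x 0) (x (n + 1)) = n + 1 := by
      simpa only [Nat.zero_add] using hx 0 (n + 1)
    have htri := hG.dist_triangle (u := x 0) (v := e n) (w := x (n + 1))
    have := dist_comparabilityGraph_le_one hnext
    rw [hzero]
    lia

theorem exists_le_isMax_of_finite_Ici {a : P} (ha : (Set.Ici a).Finite) :
    ∃ b, a ≤ b ∧ IsMax b := by
  obtain ⟨b, hab, hb⟩ := ha.exists_le_maximal Set.self_mem_Ici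
  exact ⟨b, hab, fun c hbc => hb.le_of_ge (hab.trans hbc) hbc⟩

theorem exists_ge_isMin_of_finite_Iic {a : P} (ha : (Set.Iic a).Finite) :
    ∃ b, b ≤ a ∧ IsMin b :=
  exists_le_isMax_of_finite_Ici (P := Pᵒᵈ) ha

end Preorder

section PartialOrder

variable [PartialOrder P]

theorem exists_isGeodesicRay_isKhalimskyMonotone [Infinite P]
    (hG : (comparabilityGraph P).Connected) (hfin : ∀ a : P, {b | a ≤ b ∨ b ≤ a}.Finite) :
    ∃ e : ℕ → P, IsGeodesicRay (comparabilityGraph P) e ∧ IsKhalimskyMonotone e ∧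
      ∀ n, IsMin (e n) ∨ IsMax (e n) := by
  have hmax (a : P) := exists_le_isMax_of_finite_Ici ((hfin a).subset fun _ => Or.inl)
  have hmin (a : P) := exists_ge_isMin_of_finite_Iic ((hfin a).subset fun _ => Or.inr)
  obtain ⟨r, -, hr⟩ := hmax (Classical.arbitrary P)
  obtain ⟨x, hx, rfl⟩ := exists_isGeodesicRay hG (fun a => (hfin a).subset fun _ hb => hb.2) r
  have hmono := hx.isKhalimskyMonotone hr
  have hchoice (n : ℕ) : ∃ b, (Even n → x n ≤ b) ∧ (Odd n → b ≤ x n) ∧ (IsMin b ∨ IsMax b) := by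
    rcases Nat.even_or_odd n with hn | hn
    · obtain ⟨b, hb, hb_max⟩ := hmax (x n)
      exact ⟨b, fun _ => hb, fun hodd => absurd hn (Nat.not_even_iff_odd.2 hodd), Or.inr hb_max⟩
    · obtain ⟨b, hb, hb_min⟩ := hmin (x n)
      exact ⟨b, fun heven => absurd heven (Nat.not_even_iff_odd.2 hn), fun _ => hb, Or.inl hb_min⟩
  choose e heven hodd hext using hchoice
  have hzero : e 0 = x 0 := hr.eq_of_ge (heven 0 Even.zero)
  exact ⟨e, hx.of_even_ge_of_odd_le hG hmono heven hodd hzero,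
    hmono.of_even_ge_of_odd_le heven hodd, hext⟩

theorem IsGeodesicRay.khalimskyLE_iff {x : ℕ → P}
    (hx : IsGeodesicRay (comparabilityGraph P) x) (hmono : IsKhalimskyMonotone x) {n m : ℕ} :
    khalimskyLE n m ↔ x n ≤ x m := by
  refine ⟨fun h => hmono h, fun hle => or_iff_not_imp_left.2 fun hne => ?_⟩
  have hadj : n + 1 = m ∨ m + 1 = n := hx.adj_iff.1 ⟨hx.injective.ne hne, Or.inl hle⟩
  refine ⟨hadj, ?_⟩
  by_contra hm
  have hn : Even n := by grind
  exact hne (hx.injective (hle.antisymm (hmono (Or.inr ⟨hadj.symm, hn⟩))))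

end PartialOrder

end Khalimsky

section Specialization

variable {X : Type*} [TopologicalSpace X]

theorem specLE_iff_specializes {x y : X} : specLE x y ↔ x ⤳ y :=
  specializes_iff_mem_closure.symm

/-- The specialization order of a T0 space, with `x ≤ y` iff `y ∈ closure {x}`. This is the dual
of Mathlib's `specializationOrder`. -/
abbrev specPartialOrder (X : Type*) [TopologicalSpace X] [T0Space X] : PartialOrder X where
  le := specLE
  le_refl _ := specLE_iff_specializes.2 specializes_rfl
  le_trans _ _ _ hxy hyz := by
    rw [specLE_iff_specializes] at *
    exact hxy.trans hyz
  le_antisymm _ _ hxy hyx :=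
    ((specLE_iff_specializes.1 hxy).antisymm (specLE_iff_specializes.1 hyx)).eq

/-- The graph of the relation `specComp`, whose paths are the s-paths of `X`. -/
abbrev specGraph (X : Type*) [TopologicalSpace X] : SimpleGraph X :=
  SimpleGraph.fromRel specLE

theorem specGraph_reachable_of_specializes {x y : X} (hxy : x ⤳ y) :
    (specGraph X).Reachable x y := by
  by_cases hne : x = y
  · exact hne ▸ .rfl
  · exact SimpleGraph.Adj.reachable ⟨hne, Or.inl (specLE_iff_specializes.2 hxy)⟩

theorem specGraph_connected (X : Type*) [TopologicalSpace X] [AlexandrovDiscrete X]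
    [ConnectedSpace X] : (specGraph X).Connected := by
  refine { preconnected := fun x y => ?_, nonempty := inferInstance }
  have hclopen : IsClopen {z | (specGraph X).Reachable x z} := by
    rw [IsClopen, ← isOpen_compl_iff, isOpen_iff_forall_specializes, isOpen_iff_forall_specializes]
    exact ⟨fun a b hab hb ha => hb (ha.trans (specGraph_reachable_of_specializes hab)),
      fun a b hab hb => hb.trans (specGraph_reachable_of_specializes hab).symm⟩
  exact Set.eq_univ_iff_forall.1 (hclopen.eq_univ ⟨x, .rfl⟩) y

theorem IsSPathIn.symm {S : Set X} {x y : X} {n : ℕ} (h : IsSPathIn S x y n) :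
    IsSPathIn S y x n := by
  obtain ⟨p, hinj, hS, hzero, hlast, hp⟩ := h
  refine ⟨p ∘ Fin.rev, hinj.comp Fin.rev_injective, fun i => hS _, by simpa, by simpa, fun i => ?_⟩
  have hcomp : specComp (p i.rev.succ) (p i.rev.castSucc) := (hp i.rev).symm
  simpa only [Function.comp_apply, Fin.rev_castSucc, Fin.rev_succ] using hcomp

theorem sDist_comm (S : Set X) (x y : X) : sDist S x y = sDist S y x :=
  congrArg sInf <| Set.ext fun _ => exists_congr fun _ =>
    and_congr_right fun _ => ⟨IsSPathIn.symm, IsSPathIn.symm⟩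

theorem specGraph_edist_le_sDist (S : Set X) (x y : X) :
    (specGraph X).edist x y ≤ sDist S x y := by
  refine le_sInf ?_
  rintro _ ⟨n, rfl, p, hinj, -, rfl, rfl, hp⟩
  have hle (k : Fin (n + 1)) : (specGraph X).edist (p 0) (p k) ≤ (k : ℕ) := by
    induction k using Fin.induction with
    | zero => simp
    | succ k ih =>
      have hadj : (specGraph X).Adj (p k.castSucc) (p k.succ) :=
        ⟨hinj.ne k.castSucc_lt_succ.ne, hp k⟩
      calc (specGraph X).edist (p 0) (p k.succ)
          ≤ (specGraph X).edist (p 0) (p k.castSucc) +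
              (specGraph X).edist (p k.castSucc) (p k.succ) := SimpleGraph.edist_triangle
        _ ≤ (k : ℕ) + 1 := add_le_add ih (SimpleGraph.edist_eq_one_iff_adj.2 hadj).le
        _ = (k.succ : ℕ) := by simp
  simpa using hle (Fin.last n)

theorem IsGeodesicRay.sDist_eq {e : ℕ → X} (he : IsGeodesicRay (specGraph X) e) {S : Set X}
    (hS : Set.range e ⊆ S) (i k : ℕ) : sDist S (e i) (e (i + k)) = k := by
  apply le_antisymm
  · refine sInf_le ⟨k, rfl, fun j => e (i + j), fun a b hab => ?_, fun j => hS ⟨_, rfl⟩, rfl, rfl,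
      fun j => (he.adj_iff.2 (Or.inl rfl)).2⟩
    exact Fin.ext (Nat.add_left_cancel (he.injective hab))
  · calc (k : ℕ∞) = (specGraph X).dist (e i) (e (i + k)) := by rw [he i k]
      _ ≤ (specGraph X).edist (e i) (e (i + k)) := ENat.natCast_toNat_le_self _
      _ ≤ sDist S (e i) (e (i + k)) := specGraph_edist_le_sDist S _ _

theorem IsGeodesicRay.sDist_range_eq_sDist_univ {e : ℕ → X} (he : IsGeodesicRay (specGraph X) e)
    (i j : ℕ) : sDist (Set.range e) (e i) (e j) = sDist Set.univ (e i) (e j) := by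
  wlog hij : i ≤ j generalizing i j
  · rw [sDist_comm, this j i (le_of_not_ge hij), sDist_comm]
  obtain ⟨k, rfl⟩ := Nat.exists_eq_add_of_le hij
  rw [he.sDist_eq subset_rfl, he.sDist_eq (Set.subset_univ _)]

end Specialization

/-- A connected, locally finite T0 Alexandroff space is infinite iff it contains an
isometric, spanning subset order-isomorphic to the Khalimsky half-line. -/
theorem stmt0 {X : Type*} [TopologicalSpace X] [AlexandrovDiscrete X] [T0Space X]
    [ConnectedSpace X] (hlf : ∀ x : X, {y : X | specComp x y}.Finite) :
    Infinite X ↔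
      ∃ A : Set X,
        (A ⊆ {x : X | ∀ y, specLE y x → y = x} ∪ {x : X | ∀ y, specLE x y → y = x}) ∧
        (∃ e : ℕ → X, Function.Injective e ∧ Set.range e = A ∧
          ∀ n m : ℕ, khalimskyLE n m ↔ specLE (e n) (e m)) ∧
        (∀ x ∈ A, ∀ y ∈ A, sDist A x y = sDist Set.univ x y) := by
  constructor
  · intro _
    let := specPartialOrder X
    obtain ⟨e, he, hmono, hext⟩ :=
      exists_isGeodesicRay_isKhalimskyMonotone (specGraph_connected X) hlf
    refine ⟨Set.range e, ?_, ⟨e, he.injective, rfl, fun n m => he.khalimskyLE_iff hmono⟩, ?_⟩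
    · rintro _ ⟨n, rfl⟩
      exact (hext n).imp (fun h y hy => h.eq_of_le hy) fun h y hy => h.eq_of_ge hy
    · rintro _ ⟨i, rfl⟩ _ ⟨j, rfl⟩
      exact he.sDist_range_eq_sDist_univ i j
  · rintro ⟨A, -, ⟨e, he, -⟩, -⟩
    exact Infinite.of_injective e he
end

section
/- If X is an infinite, locally finite T0 Alexandroff space, then X does not have the fixed point property: there exists a continuous map f : X → X with f(x) ≠ x for every x ∈ X. -/
/-!
Join two points of a poset when they are comparable. If this graph is disconnected, sending one
component to a point outside it and everything else to a point inside it gives a monotone map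
without fixed points. If it is connected, let `o` be a minimal point. Along a comparability `x < y`
the distance from `o` changes by at most one, and if it changes, then the endpoint at even distance
is the smaller one; so the distance is a monotone map to the infinite fence `0 < 1 > 2 < 3 > ⋯`. By
Kőnig's lemma there is a geodesic ray from `o`, and it embeds the fence monotonically. Going down to
the fence, shifting it by two, and coming back along the ray raises every distance from `o` by two,
so no point is fixed. A preorder is reduced to its poset of equivalence classes.
-/

open Relation Set

namespace SpecializationFixedPoint

section GeodesicRay

variable {V : Type*} {G : SimpleGraph V}

theorem exists_adj_dist_eq_dist_add_one (hG : G.Connected) {u w : V} (huw : u ≠ w) :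
    ∃ v, G.Adj u v ∧ G.dist u w = G.dist v w + 1 := by
  obtain ⟨p, hp⟩ := hG.exists_walk_length_eq_dist u w
  cases p with
  | nil => exact absurd rfl huw
  | @cons _ v _ huv q =>
    refine ⟨v, huv, ?_⟩
    have hq : G.dist v w ≤ q.length := SimpleGraph.dist_le q
    have htri : G.dist u w ≤ G.dist u v + G.dist v w := hG.dist_triangle
    rw [SimpleGraph.dist_eq_one_iff_adj.2 huv] at htri
    rw [SimpleGraph.Walk.length_cons] at hp
    lia

/-- The order on the vertices of a connected graph in which `y ≤ z` when some geodesic from `o` to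
`z` passes through `y`. It turns geodesics from `o` into chains, which is the form in which Kőnig's
lemma applies. -/
noncomputable abbrev geodesicOrder (hG : G.Connected) (o : V) : PartialOrder V where
  le y z := G.dist o z = G.dist o y + G.dist y z
  le_refl y := by rw [SimpleGraph.dist_self, add_zero]
  le_trans x y z hxy hyz := by
    have hoz : G.dist o z ≤ G.dist o x + G.dist x z := hG.dist_triangle
    have hxz : G.dist x z ≤ G.dist x y + G.dist y z := hG.dist_triangle
    lia
  le_antisymm y z hyz hzy := hG.dist_eq_zero_iff.1 (by lia)

theorem dist_lt_dist_of_geodesicOrder_lt (hG : G.Connected) {o y z : V}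
    (hyz : (geodesicOrder hG o).lt y z) : G.dist o y < G.dist o z := by
  let _ := geodesicOrder hG o
  have hle : G.dist o z = G.dist o y + G.dist y z := hyz.le
  have hpos : 0 < G.dist y z := hG.pos_dist_of_ne hyz.ne
  lia

theorem adj_and_dist_of_geodesicOrder_covBy (hG : G.Connected) {o y z : V}
    (hyz : @CovBy V (geodesicOrder hG o).toLT y z) :
    G.Adj y z ∧ G.dist o z = G.dist o y + 1 := by
  let _ := geodesicOrder hG o
  obtain ⟨v, hyv, hdist⟩ := exists_adj_dist_eq_dist_add_one hG hyz.ne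
  have hyv_one : G.dist y v = 1 := SimpleGraph.dist_eq_one_iff_adj.2 hyv
  have hoz : G.dist o z = G.dist o y + G.dist y z := hyz.le
  have hov_le : G.dist o v ≤ G.dist o y + G.dist y v := hG.dist_triangle
  have hoz_le : G.dist o z ≤ G.dist o v + G.dist v z := hG.dist_triangle
  have hyv_le : y ≤ v := show G.dist o v = G.dist o y + G.dist y v by lia
  have hvz_le : v ≤ z := show G.dist o z = G.dist o v + G.dist v z by lia
  obtain rfl : v = z := (hyz.eq_or_eq hyv_le hvz_le).resolve_left hyv.ne'
  exact ⟨hyv, by lia⟩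

/-- The geodesic order is graded by the distance from `o`. -/
noncomputable abbrev geodesicGradeMinOrder (hG : G.Connected) (o : V) :
    let _ := geodesicOrder hG o
    GradeMinOrder ℕ V :=
  let _ := geodesicOrder hG o
  { grade := G.dist o
    grade_strictMono := fun _ _ => dist_lt_dist_of_geodesicOrder_lt hG
    covBy_grade := fun _ _ h =>
      Order.covBy_iff_add_one_eq.2 (adj_and_dist_of_geodesicOrder_covBy hG h).2.symm
    isMin_grade := fun y hy => by
      have hoy : o ≤ y := show G.dist o y = G.dist o o + G.dist o y by simp
      rw [← hy.eq_of_le hoy, SimpleGraph.dist_self]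
      exact isMin_bot }

theorem exists_geodesic_ray [Infinite V] (hG : G.Connected)
    (hfin : ∀ v, (G.neighborSet v).Finite) (o : V) :
    ∃ r : ℕ → V, (∀ n, G.Adj (r n) (r (n + 1))) ∧ ∀ n, G.dist o (r n) = n := by
  let _ := geodesicOrder hG o
  let _ := geodesicGradeMinOrder hG o
  let _ : OrderBot V :=
    { bot := o
      bot_le := fun y => show G.dist o y = G.dist o o + G.dist o y by simp }
  obtain ⟨r, -, hcov, hgrade⟩ :=
    GradeMinOrder.exists_nat_orderEmbedding_of_forall_covby_finite (α := V) fun v =>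
      (hfin v).subset fun _ hvw => (adj_and_dist_of_geodesicOrder_covBy hG hvw).1
  exact ⟨r, fun n => (adj_and_dist_of_geodesicOrder_covBy hG (hcov n)).1, hgrade⟩

end GeodesicRay

/-- The order of the infinite fence `0 < 1 > 2 < 3 > ⋯` on the natural numbers. -/
def FenceLE (m n : ℕ) : Prop := m = n ∨ Even m ∧ (n = m + 1 ∨ m = n + 1)

theorem FenceLE.antisymm {m n : ℕ} (hmn : FenceLE m n) (hnm : FenceLE n m) : m = n := by
  grind [FenceLE]

theorem FenceLE.add_two {m n : ℕ} (hmn : FenceLE m n) : FenceLE (m + 2) (n + 2) := by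
  grind [FenceLE]

/-- The graph on `X` joining distinct comparable points. -/
abbrev comparabilityGraph (X : Type*) [LE X] : SimpleGraph X :=
  SimpleGraph.fromRel (V := X) (· ≤ ·)

section Comparability

variable {X : Type*}

theorem reachable_comparabilityGraph_of_le [LE X] {x y : X} (hxy : x ≤ y) :
    (comparabilityGraph X).Reachable x y := by
  by_cases h : x = y
  · exact h ▸ SimpleGraph.Reachable.refl x
  · exact SimpleGraph.Adj.reachable ⟨h, Or.inl hxy⟩

theorem dist_le_dist_add_one_of_symmGen [LE X] (o : X) {x y : X} (hxy : SymmGen (· ≤ ·) x y) :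
    (comparabilityGraph X).dist o y ≤ (comparabilityGraph X).dist o x + 1 := by
  by_cases h : x = y
  · exact h ▸ Nat.le_succ _
  · have hadj : (comparabilityGraph X).Adj x y := ⟨h, hxy⟩
    have := hadj.diff_dist_adj (u := o)
    lia

theorem exists_monotone_forall_ne_of_not_preconnected [Preorder X]
    (hX : ¬ (comparabilityGraph X).Preconnected) :
    ∃ f : X → X, Monotone f ∧ ∀ x, f x ≠ x := by
  classical
  obtain ⟨a, b, hab⟩ : ∃ a b, ¬ (comparabilityGraph X).Reachable a b := by
    simpa only [SimpleGraph.Preconnected, not_forall] using hX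
  refine ⟨fun x => if (comparabilityGraph X).Reachable a x then b else a, fun x y hxy => ?_,
    fun x => ?_⟩
  · have hreach := reachable_comparabilityGraph_of_le hxy
    have hiff : (comparabilityGraph X).Reachable a x ↔ (comparabilityGraph X).Reachable a y :=
      ⟨fun h => h.trans hreach, fun h => h.trans hreach.symm⟩
    simp only [hiff, le_refl]
  · dsimp only
    split_ifs with h
    · exact fun hbx => hab (hbx ▸ h)
    · exact fun hax => h (hax ▸ SimpleGraph.Reachable.refl a)

section PartialOrder

variable [PartialOrder X] {o : X}

theorem even_or_odd_dist_of_isMin (hG : (comparabilityGraph X).Connected) (ho : IsMin o) {x y : X}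
    (hdist : (comparabilityGraph X).dist o y = (comparabilityGraph X).dist o x + 1) :
    (x ≤ y → Even ((comparabilityGraph X).dist o x)) ∧
      (y ≤ x → Odd ((comparabilityGraph X).dist o x)) := by
  induction hn : (comparabilityGraph X).dist o x generalizing x y with
  | zero =>
    obtain rfl : o = x := hG.dist_eq_zero_iff.1 hn
    refine ⟨fun _ => Even.zero, fun hyo => ?_⟩
    rw [ho.eq_of_le hyo] at hdist
    simp at hdist
  | succ n ih =>
    have hxo : x ≠ o := by
      rintro rfl
      simp at hn
    obtain ⟨z, ⟨-, hxz⟩, hz⟩ := exists_adj_dist_eq_dist_add_one hG hxo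
    rw [SimpleGraph.dist_comm, SimpleGraph.dist_comm (u := z)] at hz
    have hzn : (comparabilityGraph X).dist o z = n := by lia
    obtain ⟨heven, hodd⟩ := ih hz hzn
    -- `z` and `y` are two levels apart, so `x` cannot lie between them in the order.
    have hzy : ¬ SymmGen (· ≤ ·) z y := fun h => by
      have := dist_le_dist_add_one_of_symmGen o h
      lia
    refine ⟨fun hxy => ?_, fun hyx => ?_⟩
    · exact (hodd (hxz.resolve_right fun hzx => hzy (.of_le (hzx.trans hxy)))).add_one
    · exact (heven (hxz.resolve_left fun hxz' => hzy (.of_ge (hyx.trans hxz')))).add_one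

theorem fenceLE_dist_of_le (hG : (comparabilityGraph X).Connected) (ho : IsMin o) {x y : X}
    (hxy : x ≤ y) :
    FenceLE ((comparabilityGraph X).dist o x) ((comparabilityGraph X).dist o y) := by
  have hy := dist_le_dist_add_one_of_symmGen o (.of_le hxy)
  have hx := dist_le_dist_add_one_of_symmGen o (.of_ge hxy)
  obtain h | h | h : (comparabilityGraph X).dist o x = (comparabilityGraph X).dist o y ∨
      (comparabilityGraph X).dist o y = (comparabilityGraph X).dist o x + 1 ∨
      (comparabilityGraph X).dist o x = (comparabilityGraph X).dist o y + 1 := by lia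
  · exact Or.inl h
  · exact Or.inr ⟨(even_or_odd_dist_of_isMin hG ho h).1 hxy, Or.inl h⟩
  · have hodd := (even_or_odd_dist_of_isMin hG ho h).2 hxy
    exact Or.inr ⟨h ▸ hodd.add_one, Or.inr h⟩

theorem le_of_fenceLE_of_geodesic_ray (hG : (comparabilityGraph X).Connected) (ho : IsMin o)
    {r : ℕ → X} (hadj : ∀ n, (comparabilityGraph X).Adj (r n) (r (n + 1)))
    (hdist : ∀ n, (comparabilityGraph X).dist o (r n) = n) {m n : ℕ} (hmn : FenceLE m n) :
    r m ≤ r n := by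
  have hcomp : r m ≤ r n ∨ r n ≤ r m := by
    obtain rfl | ⟨-, rfl | rfl⟩ := hmn
    · exact Or.inl le_rfl
    · exact (hadj m).2
    · exact (hadj n).2.symm
  refine hcomp.elim id fun hle => ?_
  have hnm : FenceLE n m := by simpa only [hdist] using fenceLE_dist_of_le hG ho hle
  exact (congrArg r (hmn.antisymm hnm)).le

theorem exists_monotone_forall_ne_of_connected [Infinite X]
    (hfin : ∀ x : X, {y | SymmGen (· ≤ ·) x y}.Finite) (hG : (comparabilityGraph X).Connected) :
    ∃ f : X → X, Monotone f ∧ ∀ x, f x ≠ x := by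
  obtain ⟨a⟩ := hG.nonempty
  obtain ⟨o, ho⟩ := ((hfin a).subset fun _ => SymmGen.of_ge : (Iic a).Finite).exists_minimal
    nonempty_Iic
  have hmin : IsMin o := (minimal_le_iff.1 ho).2
  obtain ⟨r, hadj, hdist⟩ := exists_geodesic_ray hG (fun x => (hfin x).subset fun _ h => h.2) o
  refine ⟨fun x => r ((comparabilityGraph X).dist o x + 2), fun x y hxy => ?_, fun x hx => ?_⟩
  · exact le_of_fenceLE_of_geodesic_ray hG hmin hadj hdist (fenceLE_dist_of_le hG hmin hxy).add_two
  · have hshift := hdist ((comparabilityGraph X).dist o x + 2)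
    rw [show r ((comparabilityGraph X).dist o x + 2) = x from hx] at hshift
    lia

theorem exists_monotone_forall_ne_of_partialOrder [Infinite X]
    (hfin : ∀ x : X, {y | SymmGen (· ≤ ·) x y}.Finite) :
    ∃ f : X → X, Monotone f ∧ ∀ x, f x ≠ x := by
  by_cases hG : (comparabilityGraph X).Preconnected
  · exact exists_monotone_forall_ne_of_connected hfin ⟨hG⟩
  · exact exists_monotone_forall_ne_of_not_preconnected hG

end PartialOrder

theorem infinite_antisymmetrization [Preorder X] [Infinite X]
    (hfin : ∀ x : X, {y | SymmGen (· ≤ ·) x y}.Finite) :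
    Infinite (Antisymmetrization X (· ≤ ·)) := by
  by_contra h
  have := not_infinite_iff_finite.1 h
  obtain ⟨q, hq⟩ := Finite.exists_infinite_fiber (toAntisymmetrization (α := X) (· ≤ ·))
  rw [infinite_coe_iff] at hq
  obtain ⟨x, rfl⟩ := hq.nonempty
  exact hq ((hfin x).subset fun y hy => Or.inr (Quotient.exact hy).1)

theorem exists_monotone_forall_ne [Preorder X] [Infinite X]
    (hfin : ∀ x : X, {y | SymmGen (· ≤ ·) x y}.Finite) :
    ∃ f : X → X, Monotone f ∧ ∀ x, f x ≠ x := by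
  have := infinite_antisymmetrization hfin
  obtain ⟨g, hg, hgne⟩ :=
    exists_monotone_forall_ne_of_partialOrder (X := Antisymmetrization X (· ≤ ·)) fun q =>
      ((hfin (ofAntisymmetrization _ q)).preimage
        (OrderEmbedding.ofAntisymmetrization X).injective.injOn).subset fun _ h =>
          h.imp ofAntisymmetrization_le_ofAntisymmetrization_iff.2
            ofAntisymmetrization_le_ofAntisymmetrization_iff.2
  refine ⟨fun x => ofAntisymmetrization _ (g (toAntisymmetrization _ x)), fun x y hxy => ?_,
    fun x hx => hgne (toAntisymmetrization _ x) ?_⟩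
  · exact (OrderEmbedding.ofAntisymmetrization X).monotone (hg (toAntisymmetrization_mono hxy))
  · simpa using congrArg (toAntisymmetrization (· ≤ ·)) hx

end Comparability

theorem continuous_of_forall_specializes {X Y : Type*} [TopologicalSpace X] [AlexandrovDiscrete X]
    [TopologicalSpace Y] {f : X → Y} (hf : ∀ ⦃x y⦄, x ⤳ y → f x ⤳ f y) : Continuous f :=
  continuous_def.2 fun _ hs =>
    isOpen_iff_forall_specializes.2 fun _ _ hxy hy => (hf hxy).mem_open hs hy

end SpecializationFixedPoint

open SpecializationFixedPoint in
theorem stmt1_general {X : Type*} [TopologicalSpace X] [AlexandrovDiscrete X] [Infinite X]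
    (hlf : ∀ x : X, {y : X | specComp x y}.Finite) :
    ∃ f : X → X, Continuous f ∧ ∀ x, f x ≠ x := by
  -- Mathlib orders points by `x ≤ y ↔ y ⤳ x`, the dual of `specLE`.
  let _ := specializationPreorder X
  obtain ⟨f, hmono, hne⟩ := exists_monotone_forall_ne fun x : X =>
    (hlf x).subset fun _ h => h.symm.imp specializes_iff_mem_closure.1 specializes_iff_mem_closure.1
  exact ⟨f, continuous_of_forall_specializes fun _ _ h => hmono h, hne⟩

/-- An infinite, locally finite T0 Alexandroff space does not have the fixed point
property: there is a continuous self-map without fixed points. -/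
theorem stmt1 {X : Type*} [TopologicalSpace X] [AlexandrovDiscrete X] [T0Space X]
    [Infinite X] (hlf : ∀ x : X, {y : X | specComp x y}.Finite) :
    ∃ f : X → X, Continuous f ∧ ∀ x, f x ≠ x :=
  stmt1_general hlf
end

section
/- Let X be an Alexandroff space and Y an arbitrary topological space. Two continuous maps f, g : X → Y are homotopic if and only if f and g belong to the same path component of the space C(X,Y) of continuous maps from X to Y equipped with the compact-open topology. -/
/-!
Currying turns a homotopy into a path in the mapping space, and uncurrying inverts this as soon as
evaluation `C(X, Y) × X → Y` is continuous, for instance when `X` is locally compact. In an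
Alexandroff space the minimal open neighbourhood of a point `x` is compact, since any open set
containing `x` contains it; hence such a space is locally compact.
-/

section

variable {X Y : Type*} [TopologicalSpace X] [TopologicalSpace Y] {f g : C(X, Y)}

/-- The path `t ↦ H (t, ·)` in `C(X, Y)`, with its compact-open topology, traced out by a
homotopy `H`. -/
def homotopyToPath (H : f.Homotopy g) : Path f g where
  toContinuousMap := H.curry
  source' := H.curry_zero
  target' := H.curry_one

variable [LocallyCompactPair X Y]

/-- The homotopy `(t, x) ↦ p t x` given by a path `p` in `C(X, Y)`. Local compactness of the pair
makes it jointly continuous. -/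
def pathToHomotopy (p : Path f g) : f.Homotopy g where
  toFun tx := p tx.1 tx.2
  continuous_toFun := p.continuous.fst'.eval continuous_snd
  map_zero_left x := DFunLike.congr_fun p.source x
  map_one_left x := DFunLike.congr_fun p.target x

/-- The exponential law for homotopies: homotopies from `f` to `g` correspond to paths from `f`
to `g` in `C(X, Y)`. -/
def homotopyEquivPath : f.Homotopy g ≃ Path f g where
  toFun := homotopyToPath
  invFun := pathToHomotopy
  left_inv _ := rfl
  right_inv _ := rfl

end

theorem stmt2_general {X Y : Type*} [TopologicalSpace X] [TopologicalSpace Y]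
    [LocallyCompactPair X Y] (f g : C(X, Y)) :
    f.Homotopic g ↔ Joined f g :=
  homotopyEquivPath.nonempty_congr

/-- For `X` an Alexandroff space and `Y` an arbitrary topological space, two continuous
maps `f g : X → Y` are homotopic iff they lie in the same path component of `C(X,Y)`
with the compact-open topology. -/
theorem stmt2 {X Y : Type*} [TopologicalSpace X] [AlexandrovDiscrete X]
    [TopologicalSpace Y] (f g : C(X, Y)) :
    f.Homotopic g ↔ Joined f g :=
  stmt2_general f g
end

section
/- A T0 Alexandroff space X is compact if and only if the set max(X) of maximal elements of X (with respect to the specialization order) is finite and for every x ∈ X there exists y ∈ max(X) with x ≤ y. -/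
/-! The maximal points are the closed points. In an Alexandroff space every set of closed points is
closed, so the closed points form a closed discrete subset, which compactness makes finite; in a
compact T₀ space every nonempty closed set, in particular every `closure {x}`, contains a closed
point. Conversely, every open set containing `y` contains all points below `y`, so from an open
cover it suffices to keep one member for each of the finitely many maximal points. -/

section

variable {X : Type*} [TopologicalSpace X]

theorem forall_specializes_imp_eq_iff_mem_closedPoints {x : X} :
    (∀ y, x ⤳ y → y = x) ↔ x ∈ closedPoints X := by
  simp only [specializes_iff_mem_closure]
  exact closure_subset_iff_isClosed (s := {x})

theorem isClosed_of_subset_closedPoints [AlexandrovDiscrete X] {s : Set X}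
    (hs : s ⊆ closedPoints X) : IsClosed s := by
  rw [← s.biUnion_of_singleton]
  exact isClosed_iUnion₂ fun _ hx ↦ hs hx

theorem isDiscrete_closedPoints [AlexandrovDiscrete X] : IsDiscrete (closedPoints X) :=
  isDiscrete_iff_forall_mem_exists_isClosed.mpr fun s hs ↦
    ⟨s, isClosed_of_subset_closedPoints hs, Set.inter_eq_left.mpr hs⟩

theorem finite_closedPoints [AlexandrovDiscrete X] [CompactSpace X] : (closedPoints X).Finite :=
  (isClosed_of_subset_closedPoints subset_rfl).isCompact.finite isDiscrete_closedPoints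

theorem exists_mem_closedPoints_specializes [T0Space X] [CompactSpace X] (x : X) :
    ∃ y ∈ closedPoints X, x ⤳ y := by
  obtain ⟨y, hxy, hy⟩ :=
    (isClosed_closure (s := {x})).exists_closed_singleton (Set.singleton_nonempty x).closure
  exact ⟨y, hy, specializes_iff_mem_closure.mpr hxy⟩

theorem compactSpace_of_isCompact_of_forall_exists_specializes {K : Set X} (hK : IsCompact K)
    (h : ∀ x, ∃ y ∈ K, x ⤳ y) : CompactSpace X := by
  have nhdsKer_eq_univ : nhdsKer K = Set.univ :=
    Set.eq_univ_of_forall fun x ↦ mem_nhdsKer_iff_specializes.mpr (h x)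
  exact ⟨nhdsKer_eq_univ ▸ hK.nhdsKer⟩

theorem compactSpace_iff_finite_closedPoints [AlexandrovDiscrete X] [T0Space X] :
    CompactSpace X ↔ (closedPoints X).Finite ∧ ∀ x : X, ∃ y ∈ closedPoints X, x ⤳ y :=
  ⟨fun _ ↦ ⟨finite_closedPoints, exists_mem_closedPoints_specializes⟩,
    fun ⟨hfin, h⟩ ↦ compactSpace_of_isCompact_of_forall_exists_specializes hfin.isCompact h⟩

end

/-- A T0 Alexandroff space is compact iff the set of its maximal elements (for the
specialization order) is finite and every point lies below some maximal element. -/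
theorem stmt4 {X : Type*} [TopologicalSpace X] [AlexandrovDiscrete X] [T0Space X] :
    CompactSpace X ↔
      ({x : X | ∀ y, specLE x y → y = x}.Finite ∧
        ∀ x : X, ∃ y, (∀ z, specLE y z → z = y) ∧ specLE x y) := by
  simp only [specLE_iff_specializes, forall_specializes_imp_eq_iff_mem_closedPoints]
  exact compactSpace_iff_finite_closedPoints
end

section
/- Let X and Y be T0 Alexandroff spaces, let K ⊆ X be compact and U ⊆ Y be open. Then {f ∈ C(X,Y) : f(K) ⊆ U} = {f ∈ C(X,Y) : f(max(K)) ⊆ U}, where max(K) is the set of elements of K that are maximal in K with respect to the specialization order on X. -/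
/-!
If `x` specializes to `m`, every open set containing `m` contains `x`. It therefore suffices that
each point of a compact set `K` specializes to a maximal point of `K`. A minimal nonempty closed
subset of the closure of `x` in `K` exists by compactness and Zorn's lemma; it is the closure in `K`
of each of its points, so all of them are maximal.
-/

open Topology

section Maximals

variable {X : Type*} [TopologicalSpace X]

/-- The points of `K` that are maximal in `K` for the specialization preorder, oriented so that
specializations are larger. Maximality is up to topological indistinguishability, so that the
notion is meaningful in spaces that are not T0. -/
def specMaximals (K : Set X) : Set X := {x | x ∈ K ∧ ∀ y ∈ K, x ⤳ y → y ⤳ x}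

theorem specMaximals_subset (K : Set X) : specMaximals K ⊆ K := fun _ hx => hx.1

theorem specMaximals_eq_of_t0Space [T0Space X] (K : Set X) :
    specMaximals K = {x | x ∈ K ∧ ∀ y ∈ K, specLE x y → y = x} := by
  ext x
  refine and_congr_right fun _ => forall₂_congr fun y _ => ?_
  rw [specLE, ← specializes_iff_mem_closure]
  exact forall_congr' fun hxy => ⟨fun hyx => (hyx.antisymm hxy).eq, fun h => h ▸ specializes_rfl⟩

theorem exists_specializes_forall_specializes [CompactSpace X] (x : X) :
    ∃ m, x ⤳ m ∧ ∀ y, m ⤳ y → y ⤳ m := by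
  obtain ⟨V, hVx, ⟨m, hmV⟩, hV, hVmin⟩ :=
    (isClosed_closure (s := {x})).exists_minimal_nonempty_closed_subset
      (Set.singleton_nonempty x).closure
  refine ⟨m, specializes_iff_mem_closure.2 (hVx hmV), fun y hmy => ?_⟩
  have hyV : closure {y} ⊆ V :=
    hV.closure_subset_iff.2 (Set.singleton_subset_iff.2 (hmy.mem_closed hV hmV))
  have hy : closure {y} = V :=
    hVmin _ hyV (Set.singleton_nonempty y).closure isClosed_closure
  exact specializes_iff_mem_closure.2 (hy ▸ hmV)

theorem exists_mem_specMaximals_specializes {K : Set X} (hK : IsCompact K) {x : X} (hx : x ∈ K) :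
    ∃ m ∈ specMaximals K, x ⤳ m := by
  have := isCompact_iff_compactSpace.1 hK
  obtain ⟨m, hxm, hm⟩ := exists_specializes_forall_specializes (⟨x, hx⟩ : K)
  simp only [Subtype.forall, subtype_specializes_iff] at hxm hm
  exact ⟨m, ⟨m.2, hm⟩, hxm⟩

theorem subset_iff_specMaximals_subset {K V : Set X} (hK : IsCompact K) (hV : IsOpen V) :
    K ⊆ V ↔ specMaximals K ⊆ V := by
  refine ⟨(specMaximals_subset K).trans, fun hmax x hx => ?_⟩
  obtain ⟨m, hm, hxm⟩ := exists_mem_specMaximals_specializes hK hx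
  exact hxm.mem_open hV (hmax hm)

end Maximals

theorem stmt5_general {X Y : Type*} [TopologicalSpace X] [TopologicalSpace Y]
    {K : Set X} (hK : IsCompact K) {U : Set Y} (hU : IsOpen U) :
    {f : C(X, Y) | f '' K ⊆ U} = {f : C(X, Y) | f '' specMaximals K ⊆ U} := by
  ext f
  simpa only [Set.mem_ofPred_eq, Set.image_subset_iff] using
    subset_iff_specMaximals_subset hK (hU.preimage f.continuous)

/-- For T0 Alexandroff spaces `X`, `Y`, a compact `K ⊆ X` and an open `U ⊆ Y`,
`[K,U] = [max K, U]` in `C(X,Y)`. -/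
theorem stmt5 {X Y : Type*} [TopologicalSpace X] [AlexandrovDiscrete X] [T0Space X]
    [TopologicalSpace Y] [AlexandrovDiscrete Y] [T0Space Y]
    {K : Set X} (hK : IsCompact K) {U : Set Y} (hU : IsOpen U) :
    {f : C(X, Y) | f '' K ⊆ U} =
      {f : C(X, Y) | f '' {x | x ∈ K ∧ ∀ y ∈ K, specLE x y → y = x} ⊆ U} := by
  rw [← specMaximals_eq_of_t0Space]
  exact stmt5_general hK hU
end

section
/- Let X and Y be T0 Alexandroff spaces. The family of sets [x, ↓y] = {f ∈ C(X,Y) : f(x) ≤ y}, for x ∈ X and y ∈ Y, is a subbasis for the compact-open topology on C(X,Y); consequently, the compact-open topology on C(X,Y) coincides with the topology of pointwise convergence, i.e. the subspace topology induced from the product space ∏_{x∈X} Y. -/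
/-!
In an Alexandroff space a compact set `K` lies below finitely many of its own points, and a
continuous map is monotone for the specialization order. Hence `f` sends `K` into an open set `U` as
soon as it sends those finitely many points into `U`, which is a pointwise condition on `f`. Pulling
the basis of sets `↓y` back along the evaluations then yields the subbasis.
-/

open Set TopologicalSpace Topology

theorem induced_pi_eq_generateFrom {Z ι : Type*} {A : ι → Type*} [t : ∀ i, TopologicalSpace (A i)]
    {B : ∀ i, Set (Set (A i))} (hB : ∀ i, t i = generateFrom (B i)) (f : Z → ∀ i, A i) :
    induced f Pi.topologicalSpace = generateFrom (⋃ i, preimage (f · i) '' B i) := by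
  simp only [induced_to_pi, generateFrom_iUnion, ← induced_generateFrom_eq, ← hB]

theorem isTopologicalBasis_range_nhdsKer_singleton (Y : Type*) [TopologicalSpace Y]
    [AlexandrovDiscrete Y] : IsTopologicalBasis (range fun y : Y ↦ nhdsKer {y}) :=
  isTopologicalBasis_of_isOpen_of_nhds (forall_mem_range.2 fun _ ↦ isOpen_nhdsKer)
    fun y _ hy hU ↦ ⟨nhdsKer {y}, mem_range_self y, subset_nhdsKer rfl,
      nhdsKer_minimal (singleton_subset_iff.2 hy) hU⟩

theorem setOf_specLE_eq_nhdsKer {Y : Type*} [TopologicalSpace Y] (y : Y) :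
    {z | specLE z y} = nhdsKer {y} :=
  ext fun _ ↦ specializes_iff_mem_closure.symm.trans mem_nhdsKer_singleton.symm

theorem induced_pi_eq_generateFrom_specLE {Z X Y : Type*} [TopologicalSpace Y]
    [AlexandrovDiscrete Y] (f : Z → X → Y) :
    induced f Pi.topologicalSpace =
      generateFrom {S | ∃ (x : X) (y : Y), S = {z | specLE (f z x) y}} := by
  rw [induced_pi_eq_generateFrom
    fun _ ↦ (isTopologicalBasis_range_nhdsKer_singleton Y).eq_generateFrom]
  congr 1
  ext S
  simp only [mem_iUnion, mem_image, exists_range_iff, ← setOf_specLE_eq_nhdsKer]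
  exact exists₂_congr fun _ _ ↦ eq_comm

section CompactOpen

variable {X Y : Type*} [TopologicalSpace X] [TopologicalSpace Y]

theorem exists_finset_subset_nhdsKer_of_isCompact [AlexandrovDiscrete X] {K : Set X}
    (hK : IsCompact K) : ∃ t : Finset X, ↑t ⊆ K ∧ K ⊆ nhdsKer ↑t := by
  obtain ⟨t, htK, hKt⟩ := hK.elim_nhds_subcover (fun x ↦ nhdsKer {x})
    fun _ _ ↦ isOpen_nhdsKer.mem_nhds (subset_nhdsKer rfl)
  exact ⟨t, htK, hKt.trans <| iUnion₂_subset fun _ hx ↦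
    nhdsKer_mono (singleton_subset_iff.2 hx)⟩

theorem mapsTo_nhdsKer_iff {f : X → Y} (hf : Continuous f) {s : Set X} {U : Set Y}
    (hU : IsOpen U) : MapsTo f (nhdsKer s) U ↔ MapsTo f s U :=
  (hU.preimage hf).nhdsKer_subset

theorem compactOpen_eq_induced_pi [AlexandrovDiscrete X] :
    (ContinuousMap.compactOpen : TopologicalSpace C(X, Y)) =
      induced (fun (f : C(X, Y)) (x : X) ↦ f x) Pi.topologicalSpace := by
  refine le_antisymm (continuous_pi continuous_eval_const).le_induced ?_
  rw [ContinuousMap.compactOpen_eq]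
  refine le_generateFrom (forall_mem_image2.2 fun K hK U hU ↦ ?_)
  obtain ⟨t, htK, hKt⟩ := exists_finset_subset_nhdsKer_of_isCompact hK
  have mapsTo_iff (f : C(X, Y)) : MapsTo f (t : Set X) U ↔ MapsTo f K U :=
    ⟨fun h ↦ ((mapsTo_nhdsKer_iff f.continuous hU).2 h).mono_left hKt, fun h ↦ h.mono_left htK⟩
  exact isOpen_induced_iff.2 ⟨(t : Set X).pi fun _ ↦ U,
    isOpen_set_pi t.finite_toSet fun _ _ ↦ hU, ext mapsTo_iff⟩

end CompactOpen

theorem stmt6_general {X Y : Type*} [TopologicalSpace X] [AlexandrovDiscrete X]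
    [TopologicalSpace Y] [AlexandrovDiscrete Y] :
    (ContinuousMap.compactOpen : TopologicalSpace C(X, Y)) =
        generateFrom {S : Set C(X, Y) | ∃ (x : X) (y : Y), S = {f : C(X, Y) | specLE (f x) y}} ∧
      (ContinuousMap.compactOpen : TopologicalSpace C(X, Y)) =
        induced (fun (f : C(X, Y)) (x : X) ↦ f x) Pi.topologicalSpace :=
  ⟨compactOpen_eq_induced_pi.trans (induced_pi_eq_generateFrom_specLE _),
    compactOpen_eq_induced_pi⟩

/-- For T0 Alexandroff spaces `X`, `Y`, the sets `[x, ↓y] = {f : f x ≤ y}` form a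
subbasis for the compact-open topology on `C(X,Y)`; hence the compact-open topology
coincides with the topology of pointwise convergence (induced from `∏_{x∈X} Y`). -/
theorem stmt6 {X Y : Type*} [TopologicalSpace X] [AlexandrovDiscrete X] [T0Space X]
    [TopologicalSpace Y] [AlexandrovDiscrete Y] [T0Space Y] :
    (ContinuousMap.compactOpen : TopologicalSpace C(X, Y)) =
        TopologicalSpace.generateFrom
          {S : Set C(X, Y) | ∃ (x : X) (y : Y), S = {f : C(X, Y) | specLE (f x) y}} ∧
      (ContinuousMap.compactOpen : TopologicalSpace C(X, Y)) =
        TopologicalSpace.induced (fun (f : C(X, Y)) (x : X) => f x) Pi.topologicalSpace :=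
  stmt6_general
end

section
/- A T0 Alexandroff space X is hereditarily compact (every subspace of X is compact) if and only if X contains no infinite antichain with respect to the specialization order and X satisfies the ascending chain condition (X contains no strictly increasing infinite sequence). -/
/-!
Hereditarily compact spaces are the Noetherian ones, and a preorder is a well-quasi-order exactly
when it is well-founded without infinite antichains. So the point is that an Alexandrov space is
Noetherian iff its specialization order is a well-quasi-order: a strictly increasing sequence of
open sets `U n` yields points `x n ∈ U (n + 1) \ U n`, no later one of which specializes to an
earlier one; conversely, for any sequence of points, the smallest open sets containing its initial
segments eventually stabilize, so that some term specializes to an earlier one.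
-/

open Set Specialization TopologicalSpace

section Noetherian

variable {X : Type*} [TopologicalSpace X]

theorem noetherianSpace_of_wellQuasiOrderedLE_specialization
    [WellQuasiOrderedLE (Specialization X)] : NoetherianSpace X := by
  refine ⟨wellFounded_iff_isEmpty_descending_chain.2 ⟨fun ⟨U, hU⟩ ↦ ?_⟩⟩
  have hmono : StrictMono U := strictMono_nat_of_lt_succ hU
  choose x hx_mem hx_notMem using fun n ↦ SetLike.exists_of_lt (hU n)
  obtain ⟨m, n, hmn, hle⟩ := wellQuasiOrdered_le (toEquiv ∘ x)
  have hx : x m ∈ U n := hmono.monotone hmn (hx_mem m)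
  exact hx_notMem n ((toEquiv_le_toEquiv.1 hle).mem_open (U n).isOpen hx)

theorem wellQuasiOrderedLE_specialization_of_noetherianSpace [AlexandrovDiscrete X]
    [NoetherianSpace X] : WellQuasiOrderedLE (Specialization X) := by
  refine ⟨fun f ↦ ?_⟩
  let U : ℕ →o Opens X :=
    { toFun n := ⟨nhdsKer ((ofEquiv ∘ f) '' Iic n), isOpen_nhdsKer⟩
      monotone' _ _ hmn := nhdsKer_mono (image_mono (Iic_subset_Iic.2 hmn)) }
  obtain ⟨N, hN⟩ := WellFoundedGT.monotone_chain_condition U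
  have hmem : ofEquiv (f (N + 1)) ∈ U N := by
    rw [hN (N + 1) N.le_succ]
    exact subset_nhdsKer (mem_image_of_mem _ self_mem_Iic)
  obtain ⟨_, ⟨k, hk, rfl⟩, hspec⟩ := mem_nhdsKer_iff_specializes.1 hmem
  exact ⟨k, N + 1, Nat.lt_succ_of_le hk, hspec⟩

theorem noetherianSpace_iff_wellQuasiOrderedLE_specialization [AlexandrovDiscrete X] :
    NoetherianSpace X ↔ WellQuasiOrderedLE (Specialization X) :=
  ⟨fun _ ↦ wellQuasiOrderedLE_specialization_of_noetherianSpace,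
    fun _ ↦ noetherianSpace_of_wellQuasiOrderedLE_specialization⟩

end Noetherian

section SpecLE

variable {X : Type*} [TopologicalSpace X]

theorem specLE_iff_toEquiv_le {x y : X} : specLE x y ↔ toEquiv y ≤ toEquiv x :=
  specializes_iff_mem_closure.symm

theorem specLE_and_not_specLE_iff_toEquiv_lt {x y : X} :
    specLE x y ∧ ¬ specLE y x ↔ toEquiv y < toEquiv x := by
  rw [specLE_iff_toEquiv_le, specLE_iff_toEquiv_le, lt_iff_le_not_ge]

theorem specLE_and_ne_iff [T0Space X] {x y : X} :
    specLE x y ∧ x ≠ y ↔ specLE x y ∧ ¬ specLE y x := by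
  rw [specLE_and_not_specLE_iff_toEquiv_lt, specLE_iff_toEquiv_le, lt_iff_le_and_ne, ne_comm,
    toEquiv.injective.ne_iff]

theorem isAntichain_preimage_ofEquiv_iff {A : Set X} :
    IsAntichain (· ≤ ·) (ofEquiv ⁻¹' A) ↔ ∀ x ∈ A, ∀ y ∈ A, x ≠ y → ¬ specComp x y := by
  simp only [specComp, not_or, specLE_iff_toEquiv_le]
  exact ⟨fun h x hx y hy hne ↦ ⟨h hy hx hne.symm, h hx hy hne⟩,
    fun h x hx y hy hne ↦ (h x hx y hy hne).2⟩

theorem wellFoundedLT_specialization_iff :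
    WellFoundedLT (Specialization X) ↔
      ¬ ∃ c : ℕ → X, ∀ n, specLE (c n) (c (n + 1)) ∧ ¬ specLE (c (n + 1)) (c n) := by
  simp only [specLE_and_not_specLE_iff_toEquiv_lt]
  rw [WellFoundedLT, isWellFounded_iff, wellFounded_iff_isEmpty_descending_chain, isEmpty_subtype,
    not_exists]
  exact Iff.rfl

end SpecLE

/- Distinctness of consecutive terms would also admit a sequence alternating between two
topologically indistinguishable points, so strictness is expressed here by `¬ specLE`. -/
theorem stmt7_general {X : Type*} [TopologicalSpace X] [AlexandrovDiscrete X] :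
    (∀ S : Set X, IsCompact S) ↔
      ((∀ A : Set X, (∀ x ∈ A, ∀ y ∈ A, x ≠ y → ¬ specComp x y) → A.Finite) ∧
        ¬ ∃ c : ℕ → X, ∀ n, specLE (c n) (c (n + 1)) ∧ ¬ specLE (c (n + 1)) (c n)) := by
  rw [← noetherianSpace_iff_isCompact, noetherianSpace_iff_wellQuasiOrderedLE_specialization,
    wellQuasiOrderedLE_iff, and_comm, wellFoundedLT_specialization_iff]
  simp only [← isAntichain_preimage_ofEquiv_iff]
  exact Iff.rfl

/-- A T0 Alexandroff space is hereditarily compact iff it has no infinite antichains and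
contains no strictly increasing infinite sequence (ACC). -/
theorem stmt7 {X : Type*} [TopologicalSpace X] [AlexandrovDiscrete X] [T0Space X] :
    (∀ S : Set X, IsCompact S) ↔
      ((∀ A : Set X, (∀ x ∈ A, ∀ y ∈ A, x ≠ y → ¬ specComp x y) → A.Finite) ∧
        ¬ ∃ c : ℕ → X, ∀ n, specLE (c n) (c (n + 1)) ∧ c n ≠ c (n + 1)) := by
  simpa only [specLE_and_ne_iff] using stmt7_general (X := X)
end

section
/- Let X be an infinite T0 Alexandroff space and Y a discrete space with at least two points. Then C(X,Y) with the compact-open topology is an Alexandroff space if and only if X has finitely many connected components. -/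
/-!
For discrete `Y` the space `C(X, Y)` is Hausdorff, so being Alexandroff means being discrete. A
neighbourhood of a constant map only controls values on some compact set `K`, and a map can be
altered freely on a clopen set missing `K`; conversely, two maps agreeing on `K` can only differ
on a clopen set missing `K`. So `C(X, Y)` is discrete exactly when some compact set meets every
nonempty clopen set. If the components are open, such a compact set meets all of them, while it
can meet only finitely many.
-/

open Set Topology

section

variable {X Y : Type*} [TopologicalSpace X] [TopologicalSpace Y]

/-- The set `K` meets every nonempty clopen set, i.e. it is dense for the topology generated by
the clopen sets. Continuous maps to a discrete space are determined by their values on such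
a set. -/
def MeetsEveryClopen (K : Set X) : Prop :=
  ∀ ⦃U : Set X⦄, IsClopen U → U.Nonempty → (K ∩ U).Nonempty

theorem MeetsEveryClopen.eq_of_eqOn [DiscreteTopology Y] {K : Set X} (hK : MeetsEveryClopen K)
    {f g : C(X, Y)} (hfg : EqOn f g K) : f = g := by
  by_contra hne
  obtain ⟨x, hx⟩ := DFunLike.ne_iff.mp hne
  have hclopen : IsClopen {x | f x ≠ g x} :=
    (isClopen_discrete {p : Y × Y | p.1 ≠ p.2}).preimage (f.continuous.prodMk g.continuous)
  obtain ⟨y, hyK, hy⟩ := hK hclopen ⟨x, hx⟩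
  exact hy (hfg hyK)

theorem isOpen_setOfPred_eqOn_of_isCompact [DiscreteTopology Y] {K : Set X}
    (hK : IsCompact K) (f : C(X, Y)) : IsOpen {g : C(X, Y) | EqOn g f K} := by
  have hfinite : (f '' K).Finite := (hK.image f.continuous).finite_of_discrete
  have heq : {g : C(X, Y) | EqOn g f K} =
      ⋂ y ∈ f '' K, {g : C(X, Y) | MapsTo g (K ∩ f ⁻¹' {y}) {y}} := by
    ext g
    simp only [mem_iInter, mem_ofPred_eq]
    exact ⟨fun h y _ x hx => (h hx.1).trans hx.2,
      fun h x hx => h (f x) (mem_image_of_mem f hx) ⟨hx, rfl⟩⟩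
  rw [heq]
  exact hfinite.isOpen_biInter fun y _ => ContinuousMap.isOpen_setOfPred_mapsTo
    (hK.inter_right ((isClosed_discrete {y}).preimage f.continuous)) (isOpen_discrete {y})

theorem exists_isCompact_meetsEveryClopen_of_isOpen_singleton_const [Nontrivial Y] {a : Y}
    (ha : IsOpen {ContinuousMap.const X a}) : ∃ K : Set X, IsCompact K ∧ MeetsEveryClopen K := by
  classical
  obtain ⟨⟨K, V⟩, ⟨hK, haV, -⟩, hKV⟩ :=
    (nhds_basis_opens a).nhds_continuousMapConst.mem_iff.mp (ha.mem_nhds rfl)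
  refine ⟨K, hK, fun U hU hne => ?_⟩
  by_contra hKU
  obtain ⟨x, hx⟩ := hne
  obtain ⟨b, hb⟩ := exists_ne a
  let g : C(X, Y) := ⟨U.piecewise (fun _ => b) (fun _ => a),
    continuous_const.piecewise (by simp [hU.frontier_eq]) continuous_const⟩
  have hg : MapsTo g K V := fun y hy => by
    have hyU : y ∉ U := fun h => hKU ⟨y, hy, h⟩
    simpa [g, hyU] using haV
  have hgx : g x = a := DFunLike.congr_fun (hKV hg) x
  exact hb (by simpa [g, hx] using hgx)

theorem discreteTopology_continuousMap_iff_exists_isCompact_meetsEveryClopen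
    [DiscreteTopology Y] [Nontrivial Y] :
    DiscreteTopology C(X, Y) ↔ ∃ K : Set X, IsCompact K ∧ MeetsEveryClopen K := by
  constructor
  · intro _
    obtain ⟨a⟩ : Nonempty Y := inferInstance
    exact exists_isCompact_meetsEveryClopen_of_isOpen_singleton_const
      (isOpen_discrete {ContinuousMap.const X a})
  · rintro ⟨K, hK, hmeets⟩
    refine discreteTopology_iff_isOpen_singleton.mpr fun f => ?_
    have heq : {f} = {g : C(X, Y) | EqOn g f K} :=
      Subset.antisymm (singleton_subset_iff.mpr (eqOn_refl f K)) fun _ hg => hmeets.eq_of_eqOn hg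
    exact heq ▸ isOpen_setOfPred_eqOn_of_isCompact hK f

theorem MeetsEveryClopen.finite_connectedComponents [DiscreteTopology (ConnectedComponents X)]
    {K : Set X} (hmeets : MeetsEveryClopen K) (hK : IsCompact K) :
    Finite (ConnectedComponents X) := by
  have himage : ((↑) : X → ConnectedComponents X) '' K = univ := by
    refine eq_univ_of_forall fun c => ?_
    obtain ⟨x, hxK, hxc⟩ := hmeets
      ((isClopen_discrete {c}).preimage ConnectedComponents.continuous_coe)
      (ConnectedComponents.surjective_coe c)
    exact ⟨x, hxK, hxc⟩
  rw [← finite_univ_iff, ← himage]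
  exact (hK.image ConnectedComponents.continuous_coe).finite_of_discrete

theorem meetsEveryClopen_of_image_coe_connectedComponents_eq_univ {K : Set X}
    (hK : ((↑) : X → ConnectedComponents X) '' K = univ) : MeetsEveryClopen K := by
  rintro U hU ⟨x, hx⟩
  obtain ⟨y, hyK, hyx⟩ := hK.ge (mem_univ (x : ConnectedComponents X))
  exact ⟨y, hyK, hU.connectedComponent_subset hx (ConnectedComponents.coe_eq_coe'.mp hyx)⟩

theorem exists_isCompact_meetsEveryClopen_of_finite_connectedComponents
    [Finite (ConnectedComponents X)] : ∃ K : Set X, IsCompact K ∧ MeetsEveryClopen K := by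
  obtain ⟨r, hr⟩ := (ConnectedComponents.surjective_coe (α := X)).hasRightInverse
  refine ⟨range r, (finite_range r).isCompact,
    meetsEveryClopen_of_image_coe_connectedComponents_eq_univ ?_⟩
  rw [← range_comp, hr.comp_eq_id, range_id]

theorem alexandrovDiscrete_iff_discreteTopology [T1Space X] :
    AlexandrovDiscrete X ↔ DiscreteTopology X :=
  ⟨fun _ => inferInstance, fun _ => inferInstance⟩

theorem stmt8_general [DiscreteTopology (ConnectedComponents X)] [DiscreteTopology Y]
    [Nontrivial Y] : AlexandrovDiscrete C(X, Y) ↔ Finite (ConnectedComponents X) := by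
  rw [alexandrovDiscrete_iff_discreteTopology,
    discreteTopology_continuousMap_iff_exists_isCompact_meetsEveryClopen]
  exact ⟨fun ⟨_, hK, hmeets⟩ => hmeets.finite_connectedComponents hK,
    fun _ => exists_isCompact_meetsEveryClopen_of_finite_connectedComponents⟩

end

/-- For `X` an infinite T0 Alexandroff space and `Y` a discrete space with at least two
points, `C(X,Y)` with the compact-open topology is Alexandroff iff `X` has finitely
many connected components. -/
theorem stmt8 {X Y : Type*} [TopologicalSpace X] [AlexandrovDiscrete X] [T0Space X]
    [Infinite X] [TopologicalSpace Y] [DiscreteTopology Y] [Nontrivial Y] :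
    AlexandrovDiscrete C(X, Y) ↔ Finite (ConnectedComponents X) :=
  stmt8_general
end

section
/- Let X be an infinite T0 Alexandroff space and Y a T0 Alexandroff space with at least two points that is not discrete. Then C(X,Y) with the compact-open topology is an Alexandroff space if and only if X is hereditarily compact and every continuous map f : X → Y has finite image f(X). -/
open Set TopologicalSpace Topology Filter

/-!
In an Alexandroff space `A`, a net converging to `a` eventually specializes to `a`. For
`A = C(X, Y)` this is tested on nets that increase pointwise for the specialization order, since
for those pointwise convergence implies convergence in the compact-open topology, as in Dini's
theorem.

Let `a ⤳ b` in `Y` with `a ≠ b`. If open sets `Uₙ` increase to `U`, then the two-valued maps taking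
the value `a` exactly on `Uₙ` increase to the one attached to `U`, so `U = Uₙ` for some `n` and `X`
is Noetherian.

If now `f : X → Y` has infinite image, this image is well-quasi-ordered and contains a strictly
increasing sequence `z`. Send a point of `Y` lying above all `z n` to itself and any other point `y`
to `z k`, with `k` the first index such that `y` is not above `z k`. Replacing `k` by `min k m`
gives maps increasing to this one with `m`; none of them specializes to it, even after composing
with `f`.

Conversely, a map with finite image has a smallest neighbourhood, given by finitely many subbasic
conditions on its compact fibres.
-/

section Specialization

variable {A Y : Type*} [TopologicalSpace A] [TopologicalSpace Y]

lemma alexandrovDiscrete_iff_eventually_specializes :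
    AlexandrovDiscrete A ↔ ∀ a : A, ∀ᶠ b in 𝓝 a, b ⤳ a := by
  have nhds_eq_iff (a : A) : 𝓝 a = 𝓟 (nhdsKer {a}) ↔ ∀ᶠ b in 𝓝 a, b ⤳ a := by
    have principal_le : 𝓟 (nhdsKer {a}) ≤ 𝓝 a :=
      nhdsKer_singleton_eq_ker_nhds a ▸ giPrincipalKer.gc.l_u_le _
    simp only [le_antisymm_iff, principal_le, and_true, le_principal_iff, Filter.Eventually,
      ← mem_nhdsKer_singleton, Set.ofPred_mem_eq]
  simp only [alexandrovDiscrete_iff_nhds, nhds_eq_iff]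

lemma continuous_of_forall_specializes [AlexandrovDiscrete A] {h : A → Y}
    (hh : ∀ a b, a ⤳ b → h a ⤳ h b) : Continuous h :=
  ⟨fun _ hU ↦ isOpen_iff_forall_specializes.2 fun a b hab hb ↦ (hh a b hab).mem_open hU hb⟩

lemma exists_specializes_not_specializes [T0Space Y] (hY : ¬ T1Space Y) :
    ∃ a b : Y, a ⤳ b ∧ ¬ b ⤳ a := by
  by_contra! hsymm
  exact hY (t1Space_iff_specializes_imp_eq.2 fun a b hab ↦ (hab.antisymm (hsymm a b hab)).eq)

lemma partiallyWellOrderedOn_specializes [AlexandrovDiscrete Y] {S : Set Y}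
    (hS : ∀ T ⊆ S, IsCompact T) : S.PartiallyWellOrderedOn fun y y' ↦ y' ⤳ y := by
  intro u
  let v : ℕ → Y := fun n ↦ u n
  have hcompact : IsCompact (range v) := hS _ (range_subset_iff.2 fun n ↦ (u n).2)
  obtain ⟨t, ht⟩ := hcompact.elim_finite_subcover (fun m ↦ nhdsKer {v m})
    (fun _ ↦ isOpen_nhdsKer)
    (range_subset_iff.2 fun m ↦ mem_iUnion.2 ⟨m, mem_nhdsKer_singleton.2 specializes_rfl⟩)
  obtain ⟨n, hn⟩ := t.exists_nat_subset_range
  obtain ⟨m, hmt, hm⟩ := mem_iUnion₂.1 (ht (mem_range_self n))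
  exact ⟨m, n, Finset.mem_range.1 (hn hmt), mem_nhdsKer_singleton.1 hm⟩

lemma exists_seq_specializes_iff_le [T0Space Y] {S : Set Y} (hS : S.Infinite)
    (hwqo : S.PartiallyWellOrderedOn fun y y' ↦ y' ⤳ y) :
    ∃ z : ℕ → Y, (∀ n, z n ∈ S) ∧ ∀ m n, z n ⤳ z m ↔ m ≤ n := by
  have : IsPreorder Y fun y y' ↦ y' ⤳ y :=
    { refl := specializes_refl, trans := fun _ _ _ h h' ↦ h'.trans h }
  let u : ℕ → Y := fun n ↦ hS.natEmbedding _ n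
  have hu : u.Injective := Subtype.val_injective.comp (hS.natEmbedding _).injective
  obtain ⟨g, hg⟩ := hwqo.exists_monotone_subseq (f := u) fun n ↦ (hS.natEmbedding _ n).2
  refine ⟨u ∘ g, fun n ↦ (hS.natEmbedding _ (g n)).2, fun m n ↦ ⟨fun h ↦ ?_, hg m n⟩⟩
  by_contra! hnm
  exact hnm.ne (g.injective (hu ((hg n m hnm.le).antisymm h).eq)).symm

end Specialization

section CompactOpen

variable {X Y : Type*} [TopologicalSpace X] [TopologicalSpace Y]

lemma continuousMap_specializes_iff {f g : C(X, Y)} : f ⤳ g ↔ ∀ x, f x ⤳ g x :=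
  ContinuousMap.specializes_coe.symm.trans specializes_pi

lemma tendsto_compactOpen_of_directed_specializes {ι : Type*} [Preorder ι] [IsDirectedOrder ι]
    [Nonempty ι] {g : ι → C(X, Y)} {f : C(X, Y)} (hg : ∀ i j, i ≤ j → g j ⤳ g i)
    (hgf : ∀ x, Tendsto (fun i ↦ g i x) atTop (𝓝 (f x))) : Tendsto g atTop (𝓝 f) := by
  rw [ContinuousMap.tendsto_nhds_compactOpen]
  intro K hK U hU hfU
  have hmono : Monotone fun i ↦ g i ⁻¹' U := fun i j hij x hx ↦
    (continuousMap_specializes_iff.1 (hg i j hij) x).mem_open hU hx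
  have hcover : K ⊆ ⋃ i, g i ⁻¹' U := fun x hx ↦
    mem_iUnion.2 ((hgf x).eventually (hU.mem_nhds (hfU hx))).exists
  obtain ⟨i, hi⟩ := hK.elim_directed_cover _ (fun i ↦ hU.preimage (g i).continuous) hcover
    hmono.directed_le
  exact eventually_atTop.2 ⟨i, fun j hij ↦ hi.trans (hmono hij)⟩

lemma exists_specializes_of_directed_specializes [AlexandrovDiscrete C(X, Y)] {ι : Type*}
    [Preorder ι] [IsDirectedOrder ι] [Nonempty ι] {g : ι → C(X, Y)} {f : C(X, Y)}
    (hg : ∀ i j, i ≤ j → g j ⤳ g i) (hgf : ∀ x, Tendsto (fun i ↦ g i x) atTop (𝓝 (f x))) :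
    ∃ i, g i ⤳ f :=
  ((tendsto_compactOpen_of_directed_specializes hg hgf).eventually
    (alexandrovDiscrete_iff_eventually_specializes.1 ‹_› f)).exists

lemma eventually_specializes_of_finite_range [AlexandrovDiscrete Y] {f : C(X, Y)}
    (hfin : (range f).Finite) (hcompact : ∀ y, IsCompact (f ⁻¹' {y})) :
    ∀ᶠ g : C(X, Y) in 𝓝 f, g ⤳ f := by
  have hfibres : ∀ᶠ g : C(X, Y) in 𝓝 f, ∀ y ∈ range f, MapsTo g (f ⁻¹' {y}) (nhdsKer {y}) :=
    (eventually_all_finite hfin).2 fun y _ ↦ ContinuousMap.eventually_mapsTo (hcompact y)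
      isOpen_nhdsKer fun _ hx ↦ subset_nhdsKer hx
  filter_upwards [hfibres] with g hg
  exact continuousMap_specializes_iff.2 fun x ↦
    mem_nhdsKer_singleton.1 (hg (f x) (mem_range_self x) rfl)

end CompactOpen

section StepMap

variable {X Y : Type*} [TopologicalSpace X] [TopologicalSpace Y] {a b : Y}

open Classical in
/-- The two-valued continuous map equal to `a` on the open set `U` and to `b` elsewhere. It plays
the role of the characteristic map of `U` into the Sierpiński space. -/
noncomputable def stepMap (hab : a ⤳ b) (U : Opens X) : C(X, Y) where
  toFun := (U : Set X).piecewise (fun _ ↦ a) fun _ ↦ b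
  continuous_toFun := U.isOpen.continuous_piecewise_of_specializes continuous_const
    continuous_const fun _ ↦ hab

lemma stepMap_of_mem (hab : a ⤳ b) {U : Opens X} {x : X} (hx : x ∈ U) : stepMap hab U x = a :=
  if_pos hx

lemma stepMap_of_notMem (hab : a ⤳ b) {U : Opens X} {x : X} (hx : x ∉ U) : stepMap hab U x = b :=
  if_neg hx

lemma stepMap_specializes_iff (hab : a ⤳ b) (hba : ¬ b ⤳ a) {U V : Opens X} :
    stepMap hab V ⤳ stepMap hab U ↔ U ≤ V := by
  rw [continuousMap_specializes_iff]
  refine forall_congr' fun x ↦ ?_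
  by_cases hU : x ∈ U <;> by_cases hV : x ∈ V <;>
    simp [stepMap_of_mem, stepMap_of_notMem, hU, hV, hab, hba, specializes_rfl]

lemma tendsto_stepMap_iSup (hab : a ⤳ b) (U : ℕ →o Opens X) (x : X) :
    Tendsto (fun n ↦ stepMap hab (U n) x) atTop (𝓝 (stepMap hab (⨆ n, U n) x)) := by
  by_cases hx : x ∈ ⨆ n, U n
  · obtain ⟨n, hn⟩ := Opens.mem_iSup.1 hx
    refine tendsto_atTop_of_eventually_const (i₀ := n) fun m hm ↦ ?_
    rw [stepMap_of_mem hab hx, stepMap_of_mem hab (U.monotone hm hn)]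
  · refine tendsto_atTop_of_eventually_const (i₀ := 0) fun m _ ↦ ?_
    rw [stepMap_of_notMem hab hx, stepMap_of_notMem hab fun hm ↦ hx (Opens.mem_iSup.2 ⟨m, hm⟩)]

theorem noetherianSpace_of_alexandrovDiscrete_continuousMap [AlexandrovDiscrete C(X, Y)]
    (hab : a ⤳ b) (hba : ¬ b ⤳ a) : NoetherianSpace X := by
  refine wellFoundedGT_iff_monotone_chain_condition.2 fun U ↦ ?_
  obtain ⟨n, hn⟩ := exists_specializes_of_directed_specializes
    (fun _ _ hij ↦ (stepMap_specializes_iff hab hba).2 (U.monotone hij))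
    (tendsto_stepMap_iSup hab U)
  have hsup : ⨆ m, U m ≤ U n := (stepMap_specializes_iff hab hba).1 hn
  exact ⟨n, fun m hm ↦ (U.monotone hm).antisymm ((le_iSup U m).trans hsup)⟩

end StepMap

section ChainMap

variable {Y : Type*} [TopologicalSpace Y] {z w w' : ℕ → Y} {y y' : Y}

/-- The level of `y` relative to a sequence `z` that increases for the specialization order: the
first `n` such that `y` is not above `z n`, with junk value `0` if `y` is above the whole
sequence. -/
noncomputable def chainLevel (z : ℕ → Y) (y : Y) : ℕ := sInf {n | ¬ y ⤳ z n}

open Classical in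
/-- The map fixing the points above all `z n` and sending any other point to the value of `w` at
its level. The sequence `w` is either `z` itself or one of its truncations `n ↦ z (min n m)`. -/
noncomputable def chainMap (z w : ℕ → Y) (y : Y) : Y :=
  if ∀ n, y ⤳ z n then y else w (chainLevel z y)

lemma chainMap_of_forall_specializes (hy : ∀ n, y ⤳ z n) : chainMap z w y = y := if_pos hy

lemma chainMap_of_not_forall_specializes (hy : ¬ ∀ n, y ⤳ z n) :
    chainMap z w y = w (chainLevel z y) := if_neg hy

lemma chainLevel_le_chainLevel (hyy' : y ⤳ y') (hy : ¬ ∀ n, y ⤳ z n) :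
    chainLevel z y' ≤ chainLevel z y := by
  have hmiss : ¬ y ⤳ z (chainLevel z y) := Nat.sInf_mem (not_forall.1 hy)
  exact Nat.sInf_le fun h ↦ hmiss (hyy'.trans h)

lemma chainMap_specializes_chainMap (hw : ∀ m n, m ≤ n → w n ⤳ w m)
    (hzw : ∀ n, ∃ m, z m ⤳ w n) (hyy' : y ⤳ y') : chainMap z w y ⤳ chainMap z w y' := by
  by_cases hy' : ∀ n, y' ⤳ z n
  · rwa [chainMap_of_forall_specializes hy',
      chainMap_of_forall_specializes fun n ↦ hyy'.trans (hy' n)]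
  rw [chainMap_of_not_forall_specializes hy']
  by_cases hy : ∀ n, y ⤳ z n
  · obtain ⟨m, hm⟩ := hzw (chainLevel z y')
    rw [chainMap_of_forall_specializes hy]
    exact (hy m).trans hm
  · rw [chainMap_of_not_forall_specializes hy]
    exact hw _ _ (chainLevel_le_chainLevel hyy' hy)

lemma chainMap_specializes_of_forall_specializes (hww' : ∀ n, w' n ⤳ w n) (y : Y) :
    chainMap z w' y ⤳ chainMap z w y := by
  by_cases hy : ∀ n, y ⤳ z n
  · simp only [chainMap_of_forall_specializes hy, specializes_rfl]
  · simpa only [chainMap_of_not_forall_specializes hy] using hww' _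

lemma tendsto_chainMap_truncate (z : ℕ → Y) (y : Y) :
    Tendsto (fun m ↦ chainMap z (fun n ↦ z (min n m)) y) atTop (𝓝 (chainMap z z y)) := by
  by_cases hy : ∀ n, y ⤳ z n
  · simp only [chainMap_of_forall_specializes hy, tendsto_const_nhds]
  · simp only [chainMap_of_not_forall_specializes hy]
    refine tendsto_atTop_of_eventually_const (i₀ := chainLevel z y) fun m hm ↦ ?_
    rw [min_eq_left hm]

lemma chainMap_apply_chain (hz : ∀ m n, z n ⤳ z m ↔ m ≤ n) (k : ℕ) :
    chainMap z w (z k) = w (k + 1) := by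
  have hmiss : {n | ¬ z k ⤳ z n} = Ici (k + 1) := by
    ext n
    simp [hz]
  have hk : ¬ ∀ n, z k ⤳ z n := fun h ↦ (k.lt_succ_self).not_ge ((hz _ _).1 (h (k + 1)))
  rw [chainMap_of_not_forall_specializes hk, chainLevel, hmiss, csInf_Ici]

lemma continuous_chainMap [AlexandrovDiscrete Y] (hw : ∀ m n, m ≤ n → w n ⤳ w m)
    (hzw : ∀ n, ∃ m, z m ⤳ w n) : Continuous (chainMap z w) :=
  continuous_of_forall_specializes fun _ _ ↦ chainMap_specializes_chainMap hw hzw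

end ChainMap

section FiniteRange

variable {X Y : Type*} [TopologicalSpace X] [TopologicalSpace Y] [AlexandrovDiscrete Y]

theorem not_alexandrovDiscrete_continuousMap_of_seq (f : C(X, Y)) {z : ℕ → Y}
    (hzf : ∀ n, z n ∈ range f) (hz : ∀ m n, z n ⤳ z m ↔ m ≤ n) :
    ¬ AlexandrovDiscrete C(X, Y) := by
  intro _
  let limit : C(Y, Y) :=
    ⟨chainMap z z, continuous_chainMap (fun m n ↦ (hz m n).2) fun n ↦ ⟨n, specializes_rfl⟩⟩
  let truncation (m : ℕ) : C(Y, Y) :=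
    ⟨chainMap z fun n ↦ z (min n m), continuous_chainMap
      (fun i j hij ↦ (hz _ _).2 (min_le_min_right m hij)) fun _ ↦ ⟨_, specializes_rfl⟩⟩
  have hmono (i j : ℕ) (hij : i ≤ j) : (truncation j).comp f ⤳ (truncation i).comp f :=
    continuousMap_specializes_iff.2 fun x ↦ chainMap_specializes_of_forall_specializes
      (fun n ↦ (hz _ _).2 (min_le_min_left n hij)) (f x)
  obtain ⟨k, hk⟩ := exists_specializes_of_directed_specializes (f := limit.comp f) hmono
    fun x ↦ tendsto_chainMap_truncate z (f x)
  obtain ⟨x, hx⟩ := hzf k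
  have hspec : chainMap z (fun n ↦ z (min n k)) (z k) ⤳ chainMap z z (z k) :=
    hx ▸ continuousMap_specializes_iff.1 hk x
  rw [chainMap_apply_chain hz, chainMap_apply_chain hz, hz] at hspec
  omega

theorem finite_range_of_alexandrovDiscrete_continuousMap [NoetherianSpace X] [T0Space Y]
    [AlexandrovDiscrete C(X, Y)] (f : C(X, Y)) : (range f).Finite := by
  by_contra hinf
  have hcompact : ∀ T ⊆ range f, IsCompact T := fun T hT ↦ by
    rw [← image_preimage_eq_of_subset hT]
    exact (NoetherianSpace.isCompact _).image f.continuous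
  obtain ⟨z, hzf, hz⟩ :=
    exists_seq_specializes_iff_le hinf (partiallyWellOrderedOn_specializes hcompact)
  exact not_alexandrovDiscrete_continuousMap_of_seq f hzf hz ‹_›

end FiniteRange

theorem stmt9_general {X Y : Type*} [TopologicalSpace X] [TopologicalSpace Y]
    [AlexandrovDiscrete Y] [T0Space Y] (hY : ¬ DiscreteTopology Y) :
    AlexandrovDiscrete C(X, Y) ↔
      ((∀ S : Set X, IsCompact S) ∧ ∀ f : C(X, Y), (Set.range f).Finite) := by
  constructor
  · intro _
    obtain ⟨a, b, hab, hba⟩ :=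
      exists_specializes_not_specializes fun _ : T1Space Y ↦ hY inferInstance
    have : NoetherianSpace X := noetherianSpace_of_alexandrovDiscrete_continuousMap hab hba
    exact ⟨NoetherianSpace.isCompact, finite_range_of_alexandrovDiscrete_continuousMap⟩
  · rintro ⟨hcompact, hfin⟩
    exact alexandrovDiscrete_iff_eventually_specializes.2 fun f ↦
      eventually_specializes_of_finite_range (hfin f) fun _ ↦ hcompact _

/-- For `X` an infinite T0 Alexandroff space and `Y` a non-discrete T0 Alexandroff space
with at least two points, `C(X,Y)` with the compact-open topology is Alexandroff iff
`X` is hereditarily compact and every continuous `f : X → Y` has finite image. -/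
theorem stmt9 {X Y : Type*} [TopologicalSpace X] [AlexandrovDiscrete X] [T0Space X]
    [Infinite X] [TopologicalSpace Y] [AlexandrovDiscrete Y] [T0Space Y] [Nontrivial Y]
    (hY : ¬ DiscreteTopology Y) :
    AlexandrovDiscrete C(X, Y) ↔
      ((∀ S : Set X, IsCompact S) ∧ ∀ f : C(X, Y), (Set.range f).Finite) :=
  stmt9_general hY
end

section
/- For every infinite T0 Alexandroff space X, the space C(X,X) of continuous self-maps of X with the compact-open topology is not an Alexandroff space. -/
/-!
Order `X` by specialization, so that continuous self-maps are the monotone ones. Every neighbourhood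
of `f` in the compact-open topology contains all `g` that dominate `f` on some finite set, because a
compact set is covered by finitely many minimal open sets. If `f` has a smallest neighbourhood, then
`f ≤ g` for monotone `g` can therefore be tested on a finite set.

Suppose that this holds for every monotone self-map `f`. Applied to maps with two values, it makes
`X` well-quasi-ordered. A maximal chain of `X` is then well-ordered and a retract of `X`, via
`x ↦ sup {c | c ≤ x}`, so finite testability passes from the retraction to the identity of the
chain. Some maximal chain is infinite, and there rounding down to a finite set `F` (together with
the least element) is monotone and fixes `F` without dominating the identity.
-/

open Filter Function Set Topology

/-- A monotone map `f` is finitely testable if whether a monotone map dominates `f` can be decided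
on finitely many points. For the specialization order, this is the order-theoretic form of `f`
having a smallest neighbourhood in the compact-open topology. -/
def FinitelyTestable {P Q : Type*} [Preorder P] [Preorder Q] (f : P →o Q) : Prop :=
  ∃ F : Finset P, ∀ g : P →o Q, (∀ x ∈ F, f x ≤ g x) → f ≤ g

namespace FinitelyTestable

section Preorder

variable {P Q R : Type*} [Preorder P] [Preorder Q] [Preorder R]

theorem of_orderEmbedding_comp {f : P →o Q} (e : Q ↪o R)
    (h : FinitelyTestable (e.toOrderHom.comp f)) : FinitelyTestable f := by
  obtain ⟨F, hF⟩ := h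
  refine ⟨F, fun g hg x => e.le_iff_le.1 ?_⟩
  exact hF (e.toOrderHom.comp g) (fun y hy => e.monotone (hg y hy)) x

theorem of_comp_surjective {f : Q →o R} {r : P →o Q} (hr : Surjective r)
    (h : FinitelyTestable (f.comp r)) : FinitelyTestable f := by
  classical
  obtain ⟨F, hF⟩ := h
  refine ⟨F.image r, fun g hg => hr.forall.2 ?_⟩
  exact hF (g.comp r) fun x hx => hg (r x) (Finset.mem_image_of_mem r hx)

end Preorder

theorem exists_lt_of_id {P : Type*} [PartialOrder P] [Infinite P]
    (h : FinitelyTestable (OrderHom.id : P →o P)) : ∃ a b : P, a < b := by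
  classical
  by_contra! h_not_lt
  have eq_of_le {x y : P} (hxy : x ≤ y) : x = y := hxy.eq_of_not_lt (h_not_lt x y)
  obtain ⟨F, hF⟩ := h
  obtain ⟨x, hx⟩ := Infinite.exists_notMem_finset F
  obtain ⟨y, hyx⟩ := exists_ne x
  let g : P →o P := ⟨update id x y, fun a b hab => by rw [eq_of_le hab]⟩
  have hg : ∀ z ∈ F, z ≤ g z := fun z hz => by
    have hgz : g z = z := update_of_ne (ne_of_mem_of_not_mem hz hx) y id
    exact hgz.ge
  have hxy : x ≤ g x := hF g hg x
  exact hyx (eq_of_le (hxy.trans_eq (update_self x y id))).symm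

end FinitelyTestable

theorem not_finitelyTestable_id {R : Type*} [LinearOrder R] [OrderBot R] [Infinite R] :
    ¬ FinitelyTestable (OrderHom.id : R →o R) := by
  rintro ⟨F, hF⟩
  let roundDown : R →o R :=
    ⟨fun x => {y ∈ F | y ≤ x}.sup id, fun a b hab => Finset.sup_mono <|
      Finset.monotone_filter_right F fun _ _ hy => hy.trans hab⟩
  have le_roundDown : ∀ x ∈ F, x ≤ roundDown x := fun x hx =>
    Finset.le_sup (f := id) (Finset.mem_filter.2 ⟨hx, le_rfl⟩)
  obtain ⟨x, hx⟩ := Infinite.exists_notMem_finset (insert ⊥ F)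
  rw [Finset.mem_insert, not_or] at hx
  have roundDown_lt : roundDown x < x := by
    refine (Finset.sup_lt_iff (bot_lt_iff_ne_bot.2 hx.1)).2 fun y hy => ?_
    obtain ⟨hyF, hyx⟩ := Finset.mem_filter.1 hy
    exact hyx.lt_of_ne (ne_of_mem_of_not_mem hyF hx.2)
  exact roundDown_lt.not_ge (hF roundDown le_roundDown x)

theorem wellQuasiOrderedLE_of_forall_finitelyTestable {P : Type*} [Preorder P]
    (h : ∀ f : P →o Prop, FinitelyTestable f) : WellQuasiOrderedLE P := by
  refine ⟨fun u => ?_⟩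
  let f : P →o Prop := ⟨fun x => ∃ n, u n ≤ x, fun x y hxy ⟨n, hn⟩ => ⟨n, hn.trans hxy⟩⟩
  obtain ⟨F, hF⟩ := h f
  choose! index h_index using fun x (hx : f x) => hx
  let N := F.sup index
  let g : P →o Prop :=
    ⟨fun x => ∃ n ≤ N, u n ≤ x, fun x y hxy ⟨n, hnN, hn⟩ => ⟨n, hnN, hn.trans hxy⟩⟩
  have hfg : f ≤ g := hF g fun x hx hfx => ⟨index x, Finset.le_sup hx, h_index x hfx⟩
  obtain ⟨n, hnN, hn⟩ : g (u (N + 1)) := hfg (u (N + 1)) ⟨N + 1, le_rfl⟩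
  exact ⟨n, N + 1, Nat.lt_succ_of_le hnN, hn⟩

theorem exists_orderEmbedding_prop_of_lt {Q : Type*} [Preorder Q] {a b : Q} (hab : a < b) :
    Nonempty (Prop ↪o Q) := by
  classical
  refine ⟨OrderEmbedding.ofMapLEIff (fun p => if p then b else a) fun p q => ?_⟩
  by_cases hp : p <;> by_cases hq : q <;> simp [hp, hq, hab.le, hab.not_ge]

section Flag

variable {P : Type*} [PartialOrder P]

theorem exists_infinite_flag [WellQuasiOrderedLE P] [Infinite P] : ∃ s : Flag P, Infinite s := by
  let u := Infinite.natEmbedding P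
  obtain ⟨φ, hφ⟩ := (wellQuasiOrdered_le (α := P)).exists_monotone_subseq u
  have h_mono : Monotone (u ∘ φ) := fun m n hmn => hφ m n hmn
  obtain ⟨s, hs⟩ := h_mono.isChain_range.exists_subset_flag
  have h_range : (range (u ∘ φ)).Infinite :=
    infinite_range_of_injective (u.injective.comp φ.injective)
  exact ⟨s, (h_range.mono hs).to_subtype⟩

theorem bddAbove_setOf_coe_le (s : Flag P) (x : P) : BddAbove {c : s | (c : P) ≤ x} := by
  by_contra h_unbounded
  have h_le : ∀ c : s, (c : P) ≤ x := fun c => by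
    obtain ⟨d, hdx, hdc⟩ := not_bddAbove_iff'.1 h_unbounded c
    exact ((s.le_or_le c.2 d.2).resolve_right hdc).trans hdx
  have hxs : x ∈ s := Flag.mem_iff_forall_le_or_ge.2 fun c hc => .inr (h_le ⟨c, hc⟩)
  exact h_unbounded ⟨⟨x, hxs⟩, fun c hc => hc⟩

theorem exists_orderHom_leftInverse_coe (s : Flag P) [Nonempty s] [WellFoundedLT s] :
    ∃ r : P →o s, LeftInverse r ((↑) : s → P) := by
  classical
  let _ : OrderBot s := WellFoundedLT.toOrderBot s
  let _ : ConditionallyCompleteLinearOrderBot s :=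
    WellFoundedLT.conditionallyCompleteLinearOrderBot s
  refine ⟨⟨fun x => sSup {c : s | (c : P) ≤ x}, fun x y hxy => ?_⟩, fun c => ?_⟩
  · exact csSup_le_csSup' (bddAbove_setOf_coe_le s y) fun c hc => hc.trans hxy
  · exact csSup_Iic

end Flag

theorem exists_not_finitelyTestable (P : Type*) [PartialOrder P] [Infinite P] :
    ∃ f : P →o P, ¬ FinitelyTestable f := by
  classical
  by_contra! h
  obtain ⟨a, b, hab⟩ := (h OrderHom.id).exists_lt_of_id
  obtain ⟨e⟩ := exists_orderEmbedding_prop_of_lt hab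
  have : WellQuasiOrderedLE P := wellQuasiOrderedLE_of_forall_finitelyTestable fun f =>
    (h (e.toOrderHom.comp f)).of_orderEmbedding_comp e
  obtain ⟨s, _⟩ := exists_infinite_flag (P := P)
  obtain ⟨r, hr⟩ := exists_orderHom_leftInverse_coe s
  let _ : OrderBot s := WellFoundedLT.toOrderBot s
  let ι : s ↪o P := OrderEmbedding.subtype (· ∈ s)
  have h_id : FinitelyTestable (OrderHom.id : s →o s) :=
    ((h (ι.toOrderHom.comp r)).of_orderEmbedding_comp ι).of_comp_surjective hr.surjective
  exact not_finitelyTestable_id h_id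

section CompactOpen

variable {X Y : Type*} [TopologicalSpace X] [TopologicalSpace Y]

theorem iInf_principal_specializes_le_nhds [AlexandrovDiscrete X] (f : C(X, Y)) :
    ⨅ x, 𝓟 {g : C(X, Y) | g x ⤳ f x} ≤ 𝓝 f := by
  simp only [ContinuousMap.nhds_compactOpen, le_iInf_iff, le_principal_iff]
  intro K hK U hU hfKU
  obtain ⟨t, htK, hKt⟩ := hK.elim_nhds_subcover (fun x => nhdsKer {x})
    fun x _ => isOpen_nhdsKer.mem_nhds (subset_nhdsKer rfl)
  have h_mem : ⋂ x ∈ t, {g : C(X, Y) | g x ⤳ f x} ∈ ⨅ x, 𝓟 {g : C(X, Y) | g x ⤳ f x} :=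
    (biInter_finset_mem t).2 fun x _ => mem_iInf_of_mem x (mem_principal_self _)
  filter_upwards [h_mem] with g hg y hy
  obtain ⟨x, hxt, hyx⟩ := mem_iUnion₂.1 (hKt hy)
  have hgx : g x ⤳ f x := mem_iInter₂.1 hg x hxt
  have hgy : g y ⤳ g x := (mem_nhdsKer_singleton.1 hyx).map g.continuous
  exact (hgy.trans hgx).mem_open hU (hfKU (htK x hxt))

theorem exists_finset_forall_specializes [AlexandrovDiscrete X] [AlexandrovDiscrete C(X, Y)]
    (f : C(X, Y)) :
    ∃ F : Finset X, ∀ g : C(X, Y), (∀ x ∈ F, g x ⤳ f x) → ∀ x, g x ⤳ f x := by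
  have h_nhds : nhdsKer {f} ∈ 𝓝 f := isOpen_nhdsKer.mem_nhds (subset_nhdsKer rfl)
  obtain ⟨F, hF, hFf⟩ := (hasBasis_iInf_principal_finite _).mem_iff.1
    (iInf_principal_specializes_le_nhds f h_nhds)
  refine ⟨hF.toFinset, fun g hg x => ?_⟩
  have hgf : g ⤳ f := mem_nhdsKer_singleton.1 <|
    hFf (mem_iInter₂.2 fun y hy => hg y (hF.mem_toFinset.2 hy))
  exact hgf.map (continuous_eval_const x)

theorem finitelyTestable_of_alexandrovDiscrete [Preorder X] [Preorder Y]
    [Topology.IsUpperSet X] [Topology.IsUpperSet Y] [AlexandrovDiscrete C(X, Y)] (f : X →o Y) :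
    FinitelyTestable f := by
  let toContinuousMap (g : X →o Y) : C(X, Y) :=
    ⟨g, Topology.IsUpperSet.monotone_iff_continuous.1 g.monotone⟩
  obtain ⟨F, hF⟩ := exists_finset_forall_specializes (toContinuousMap f)
  simp only [Topology.IsUpperSet.specializes_iff_le] at hF
  exact ⟨F, fun g => hF (toContinuousMap g)⟩

theorem isUpperSet_specializationPreorder [AlexandrovDiscrete X] :
    @Topology.IsUpperSet X _ (specializationPreorder X) := by
  let _ : Preorder X := specializationPreorder X
  refine ⟨TopologicalSpace.ext_iff.2 fun s => ?_⟩
  exact isOpen_iff_forall_specializes.trans forall_comm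

end CompactOpen

/-- For every infinite T0 Alexandroff space `X`, the space `C(X,X)` of continuous
self-maps with the compact-open topology is not Alexandroff. -/
theorem stmt10 {X : Type*} [TopologicalSpace X] [AlexandrovDiscrete X] [T0Space X]
    [Infinite X] : ¬ AlexandrovDiscrete C(X, X) := by
  intro _
  let _ : PartialOrder X := specializationOrder X
  have : Topology.IsUpperSet X := isUpperSet_specializationPreorder
  obtain ⟨f, hf⟩ := exists_not_finitelyTestable X
  exact hf (finitelyTestable_of_alexandrovDiscrete f)
end

section
/- If X is a hereditarily compact T0 Alexandroff space and Y is a T0 Alexandroff space satisfying the descending chain condition, then C(X,Y) with the compact-open topology is an Alexandroff space. -/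
/-!
The image `f(X)` is a hereditarily compact subspace of `Y`, so the opposite of `specLE` is a
well-quasi-order on it; together with the descending chain condition this makes `f(X)` finite up to
inseparability. Hence `{g | g ≤ f}` is cut out by finitely many conditions `g(f⁻¹(U)) ⊆ U`, one for
each minimal open neighbourhood `U` of a point of `f(X)`. All the sets `f⁻¹(U)` are compact, so
these conditions are open and `f` has a least neighbourhood.
-/

open Set Specialization TopologicalSpace Topology

theorem exists_finset_antisymmRel_of_isPWO {α : Type*} [Preorder α] [WellFoundedGT α]
    {s : Set α} (hs : s.IsPWO) :
    ∃ t : Finset α, ∀ a ∈ s, ∃ b ∈ t, AntisymmRel (· ≤ ·) a b := by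
  by_contra! h
  obtain ⟨u, hus, hu⟩ := exists_seq_of_forall_finset_exists (· ∈ s)
    (fun b a ↦ ¬ AntisymmRel (· ≤ ·) a b) fun t _ ↦ h t
  obtain ⟨φ, hφ⟩ := hs.exists_monotone_subseq hus
  have hφ_strict : StrictMono (u ∘ φ) := fun m n hmn ↦
    lt_of_le_not_ge (hφ hmn.le) fun hle ↦ hu _ _ (φ.strictMono hmn) ⟨hle, hφ hmn.le⟩
  exact not_strictMono_of_wellFoundedGT _ hφ_strict

section Specialization

variable {Y : Type*} [TopologicalSpace Y]

/-- Mathlib's order on `Specialization Y` is the reverse of `specLE`, so that descending chains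
become ascending ones. -/
theorem wellFoundedGT_specialization_of_not_exists_specLE_seq
    (hY : ¬ ∃ c : ℕ → Y, ∀ n, specLE (c (n + 1)) (c n) ∧ c (n + 1) ≠ c n) :
    WellFoundedGT (Specialization Y) := by
  refine ⟨wellFounded_iff_isEmpty_descending_chain.2 ⟨fun ⟨c, hc⟩ ↦ hY ⟨ofEquiv ∘ c, fun n ↦ ?_⟩⟩⟩
  exact ⟨specializes_iff_mem_closure.1 (hc n).le, (hc n).ne'⟩

variable [AlexandrovDiscrete Y] (s : Set Y) [NoetherianSpace s]

theorem isPWO_toEquiv_image : (toEquiv '' s).IsPWO := by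
  refine partiallyWellOrderedOn_iff_exists_lt.2 fun u hu ↦ ?_
  let v : ℕ → Y := ofEquiv ∘ u
  have hvs : range v ⊆ s := range_subset_iff.2 fun n ↦ (mem_image_equiv (f := toEquiv)).1 (hu n)
  have hv : IsCompact (range v) := (noetherianSpace_set_iff s).1 ‹_› _ hvs
  obtain ⟨t, ht⟩ := hv.elim_finite_subcover (fun m ↦ nhdsKer {v m}) (fun _ ↦ isOpen_nhdsKer)
    (range_subset_iff.2 fun n ↦ mem_iUnion.2 ⟨n, subset_nhdsKer rfl⟩)
  obtain ⟨n, htn⟩ := t.exists_nat_subset_range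
  obtain ⟨m, hm, hnm⟩ := mem_iUnion₂.1 (ht (mem_range_self n))
  exact ⟨m, n, Finset.mem_range.1 (htn hm), mem_nhdsKer_singleton.1 hnm⟩

theorem exists_finset_inseparable [WellFoundedGT (Specialization Y)] :
    ∃ t : Finset Y, ∀ y ∈ s, ∃ z ∈ t, Inseparable y z := by
  obtain ⟨t, ht⟩ := exists_finset_antisymmRel_of_isPWO (isPWO_toEquiv_image s)
  refine ⟨t.map ofEquiv.toEmbedding, fun y hy ↦ ?_⟩
  obtain ⟨z, hz, hzy, hyz⟩ := ht (toEquiv y) (mem_image_of_mem _ hy)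
  exact ⟨ofEquiv z, Finset.mem_map_of_mem _ hz, inseparable_iff_specializes_and.2 ⟨hyz, hzy⟩⟩

end Specialization

theorem alexandrovDiscrete_of_nhdsKer_mem_nhds {Z : Type*} [TopologicalSpace Z]
    (h : ∀ z : Z, nhdsKer {z} ∈ 𝓝 z) : AlexandrovDiscrete Z := by
  refine ⟨fun S hS ↦ isOpen_iff_mem_nhds.2 fun z hz ↦ Filter.mem_of_superset (h z) ?_⟩
  exact fun w hw U hU ↦ (mem_nhdsKer_singleton.1 hw).mem_open (hS U hU) (hz U hU)

section ContinuousMap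

variable {X Y : Type*} [TopologicalSpace X] [NoetherianSpace X]
  [TopologicalSpace Y] [AlexandrovDiscrete Y]

theorem nhdsKer_mem_nhds_of_forall_exists_inseparable (f : C(X, Y)) (t : Finset Y)
    (ht : ∀ x, ∃ y ∈ t, Inseparable (f x) y) : nhdsKer {f} ∈ 𝓝 f := by
  have hmaps : ∀ᶠ g : C(X, Y) in 𝓝 f, ∀ y ∈ t, MapsTo g (f ⁻¹' nhdsKer {y}) (nhdsKer {y}) :=
    t.eventually_all.2 fun y _ ↦ ContinuousMap.eventually_mapsTo (NoetherianSpace.isCompact _)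
      isOpen_nhdsKer (mapsTo_preimage f _)
  filter_upwards [hmaps] with g hg
  refine mem_nhdsKer_singleton.2 (ContinuousMap.specializes_coe.1 (specializes_pi.2 fun x ↦ ?_))
  obtain ⟨y, hy, hxy⟩ := ht x
  have hgx : g x ⤳ y :=
    mem_nhdsKer_singleton.1 (hg y hy (mem_nhdsKer_singleton.2 hxy.specializes))
  exact hgx.trans hxy.specializes'

theorem stmt11_general [WellFoundedGT (Specialization Y)] : AlexandrovDiscrete C(X, Y) := by
  refine alexandrovDiscrete_of_nhdsKer_mem_nhds fun f ↦ ?_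
  have : NoetherianSpace (range f) := NoetherianSpace.range f f.continuous
  obtain ⟨t, ht⟩ := exists_finset_inseparable (range f)
  exact nhdsKer_mem_nhds_of_forall_exists_inseparable f t fun x ↦ ht (f x) (mem_range_self x)

end ContinuousMap

/-- If `X` is a hereditarily compact T0 Alexandroff space and `Y` is a T0 Alexandroff
space satisfying the descending chain condition, then `C(X,Y)` with the compact-open
topology is Alexandroff. -/
theorem stmt11 {X Y : Type*} [TopologicalSpace X] [AlexandrovDiscrete X] [T0Space X]
    [TopologicalSpace Y] [AlexandrovDiscrete Y] [T0Space Y]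
    (hX : ∀ S : Set X, IsCompact S)
    (hY : ¬ ∃ c : ℕ → Y, ∀ n, specLE (c (n + 1)) (c n) ∧ c (n + 1) ≠ c n) :
    AlexandrovDiscrete C(X, Y) := by
  have := noetherianSpace_iff_isCompact.2 hX
  have := wellFoundedGT_specialization_of_not_exists_specLE_seq hY
  exact stmt11_general
end

section
/- Let X be a T0 Alexandroff space in which every chain of the specialization order is finite, and let x ∈ X be a point such that for every y ∈ X there exists one and only one s-path (x = s^0, s^1, …, s^n = y) from x to y with the property that for each 0 ≤ i < n, one of s^i, s^{i+1} covers the other in the specialization order. Then {x} is a strong deformation retract of X. -/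
/-- `b` covers `a` in the specialization order: `a < b` with nothing strictly between. -/
def specCovers {X : Type*} [TopologicalSpace X] (a b : X) : Prop :=
  specLE a b ∧ a ≠ b ∧ ∀ c, specLE a c → specLE c b → c = a ∨ c = b

/-- `IsCoverSPath l a b`: `l` is an s-path from `a` to `b` (pairwise distinct points)
such that each point covers, or is covered by, the next one. -/
def IsCoverSPath {X : Type*} [TopologicalSpace X] (l : List X) (a b : X) : Prop :=
  l ≠ [] ∧ l.Nodup ∧ l.head? = some a ∧ l.getLast? = some b ∧
    l.Chain' (fun u v => specCovers u v ∨ specCovers v u)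

/-! View `X` as a graph whose edges are the covering pairs. Unique paths from `x` make it a tree
rooted at `x`. Cutting every path at depth `n` gives a map `f n : X → X`, and keeping in
addition those edges between depths `n` and `n + 1` that go down in the order gives a map `g n`
lying below both `f n` and `f (n + 1)`. These maps fix or contract each edge; comparable points
being joined by chains of covers, they are monotone, hence continuous. The infinite zigzag
`f 0 ≥ g 0 ≤ f 1 ≥ g 1 ≤ …` runs from the constant map `x` to the identity, and a zigzag of
comparable points in any space is traced out by a path, so at each point it gives a path. In an
Alexandroff space separate continuity is joint continuity, so these paths form a homotopy. -/

open Filter Topology unitInterval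

theorem continuous_of_separately_continuous {X Y Z : Type*} [TopologicalSpace X]
    [TopologicalSpace Y] [TopologicalSpace Z] [AlexandrovDiscrete X] {H : Z × X → Y}
    (hX : ∀ z, Continuous fun x => H (z, x)) (hZ : ∀ x, Continuous fun z => H (z, x)) :
    Continuous H := by
  refine continuous_iff_continuousAt.2 fun ⟨z, x⟩ U hU => ?_
  have hz : ∀ᶠ z' in 𝓝 z, U ∈ 𝓝 (H (z', x)) :=
    (hZ x).continuousAt (eventually_mem_nhds_iff.2 hU)
  have hx : ∀ᶠ x' in 𝓝 x, x' ⤳ x :=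
    nhdsKer_singleton_subset_iff_mem_nhds.1 fun _ => mem_nhdsKer_singleton.1
  rw [mem_map, nhds_prod_eq]
  exact (hz.prod_mk hx).mono fun p hp => mem_of_mem_nhds (hp.2.map (hX p.1) hp.1)

section Zigzag

variable {X Y α : Type*}

/-- The path that visits `f 0, g 0, f 1, g 1, …`: it is at `f n` at time `n` and at `g n`
throughout the open interval `(n, n + 1)`. At negative times it is at `f 0`. -/
noncomputable def zigzag (f g : ℕ → α) (u : ℝ) : α :=
  if ⌊u⌋₊ = ⌈u⌉₊ then f ⌊u⌋₊ else g ⌊u⌋₊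

theorem zigzag_zero (f g : ℕ → α) : zigzag f g 0 = f 0 := by
  simp [zigzag]

theorem tendsto_zigzag_atTop {f g : ℕ → α} {l : Filter α} (hf : Tendsto f atTop l)
    (hg : Tendsto g atTop l) : Tendsto (zigzag f g) atTop l :=
  (hf.comp tendsto_nat_floor_atTop).if' (hg.comp tendsto_nat_floor_atTop)

/-- The path on `[0, 1]` obtained by traversing `zigzag f g` backwards, from its limit `a` at time
`0` to `f 0` at time `1`. -/
noncomputable def zigzagToLimit (f g : ℕ → α) (a : α) : I → α :=
  Function.update (fun t : I => zigzag f g ((t : ℝ)⁻¹ - 1)) 0 a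

theorem zigzagToLimit_zero (f g : ℕ → α) (a : α) : zigzagToLimit f g a 0 = a :=
  Function.update_self ..

theorem zigzagToLimit_one (f g : ℕ → α) (a : α) : zigzagToLimit f g a 1 = f 0 := by
  simp [zigzagToLimit, zigzag_zero]

theorem zigzagToLimit_eq_of_forall_eq {f g : ℕ → α} {a : α} (hf : ∀ n, f n = a)
    (hg : ∀ n, g n = a) (t : I) : zigzagToLimit f g a t = a := by
  simp [zigzagToLimit, zigzag, hf, hg, Function.update_apply]

theorem eventually_floor_le_floor (u : ℝ) : ∀ᶠ v in 𝓝 u, ⌊v⌋₊ ≤ ⌊u⌋₊ := by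
  filter_upwards [eventually_lt_nhds (Nat.lt_floor_add_one u)] with v hv
  exact Nat.lt_succ_iff.1 ((Nat.floor_lt' (Nat.succ_ne_zero _)).2 (by exact_mod_cast hv))

theorem eventually_ceil_le_ceil (u : ℝ) : ∀ᶠ v in 𝓝 u, ⌈u⌉₊ ≤ ⌈v⌉₊ := by
  rcases hn : ⌈u⌉₊ with _ | n
  · simp
  · filter_upwards [eventually_gt_nhds (Nat.lt_ceil.1 (n.lt_succ_self.trans_eq hn.symm))] with v hv
    exact Nat.lt_ceil.2 hv

section Topology

variable [TopologicalSpace X] [TopologicalSpace Y]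

theorem eventually_zigzag_specializes {f g : ℕ → Y} (hleft : ∀ n, g n ⤳ f n)
    (hright : ∀ n, g n ⤳ f (n + 1)) (u : ℝ) :
    ∀ᶠ v in 𝓝 u, zigzag f g v ⤳ zigzag f g u := by
  filter_upwards [eventually_floor_le_floor u, eventually_ceil_le_ceil u] with v hfloor hceil
  have hu := Nat.floor_le_ceil u
  have hv := Nat.ceil_le_floor_add_one v
  unfold zigzag
  split_ifs with hvint huint huint
  · rw [show ⌊v⌋₊ = ⌊u⌋₊ by omega]
  · omega
  · obtain h | h : ⌊u⌋₊ = ⌊v⌋₊ ∨ ⌊u⌋₊ = ⌊v⌋₊ + 1 := by omega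
    · exact h ▸ hleft _
    · exact h ▸ hright _
  · rw [show ⌊v⌋₊ = ⌊u⌋₊ by omega]

theorem continuous_zigzag {f g : ℕ → Y} (hleft : ∀ n, g n ⤳ f n)
    (hright : ∀ n, g n ⤳ f (n + 1)) : Continuous (zigzag f g) :=
  continuous_iff_continuousAt.2 fun u _ hU =>
    (eventually_zigzag_specializes hleft hright u).mono fun _ hv => mem_of_mem_nhds (hv hU)

theorem tendsto_inv_sub_one_nhdsNE_zero :
    Tendsto (fun t : I => (t : ℝ)⁻¹ - 1) (𝓝[≠] 0) atTop := by
  have hval : Tendsto ((↑) : I → ℝ) (𝓝[≠] 0) (𝓝[>] 0) :=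
    tendsto_nhdsWithin_iff.2 ⟨(continuous_subtype_val.tendsto' 0 0 rfl).mono_left inf_le_left,
      eventually_mem_nhdsWithin.mono fun _ => unitInterval.pos_iff_ne_zero.2⟩
  exact tendsto_atTop_add_const_right _ _ (tendsto_inv_nhdsGT_zero.comp hval)

theorem continuous_zigzagToLimit {f g : ℕ → Y} {a : Y} (hleft : ∀ n, g n ⤳ f n)
    (hright : ∀ n, g n ⤳ f (n + 1)) (hf : Tendsto f atTop (𝓝 a)) (hg : Tendsto g atTop (𝓝 a)) :
    Continuous (zigzagToLimit f g a) := by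
  refine continuous_iff_continuousAt.2 fun t => ?_
  rcases eq_or_ne t 0 with rfl | ht
  · exact continuousAt_update_same.2
      ((tendsto_zigzag_atTop hf hg).comp tendsto_inv_sub_one_nhdsNE_zero)
  · have hinv : ContinuousAt (fun t : I => (t : ℝ)⁻¹ - 1) t :=
      (continuous_subtype_val.continuousAt.inv₀ (unitInterval.coe_ne_zero.2 ht)).sub
        continuousAt_const
    exact (continuousAt_update_of_ne ht).2
      ((continuous_zigzag hleft hright).continuousAt.comp hinv)

theorem continuous_zigzagToLimit_apply (e : C(X, Y)) (f g : ℕ → C(X, Y)) (t : I) :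
    Continuous fun x => zigzagToLimit (f · x) (g · x) (e x) t := by
  rcases eq_or_ne t 0 with rfl | ht
  · simpa only [zigzagToLimit_zero] using e.continuous
  · simp only [zigzagToLimit, Function.update_of_ne ht, zigzag]
    split_ifs
    · exact (f _).continuous
    · exact (g _).continuous

theorem homotopicRel_of_zigzag [AlexandrovDiscrete X] {e : C(X, Y)} {f g : ℕ → C(X, Y)}
    {S : Set X} (hleft : ∀ n x, g n x ⤳ f n x) (hright : ∀ n x, g n x ⤳ f (n + 1) x)
    (hf : ∀ x, Tendsto (f · x) atTop (𝓝 (e x))) (hg : ∀ x, Tendsto (g · x) atTop (𝓝 (e x)))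
    (hfS : ∀ x ∈ S, ∀ n, f n x = e x) (hgS : ∀ x ∈ S, ∀ n, g n x = e x) :
    e.HomotopicRel (f 0) S := by
  let H (p : I × X) : Y := zigzagToLimit (f · p.2) (g · p.2) (e p.2) p.1
  have hpath (x : X) : Continuous fun t => H (t, x) :=
    continuous_zigzagToLimit (hleft · x) (hright · x) (hf x) (hg x)
  have hmap (t : I) : Continuous fun x => H (t, x) :=
    continuous_zigzagToLimit_apply e f g t
  exact ⟨{ toFun := H
           continuous_toFun := continuous_of_separately_continuous hmap hpath
           map_zero_left := fun x => zigzagToLimit_zero ..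
           map_one_left := fun x => zigzagToLimit_one ..
           prop' := fun t x hx => zigzagToLimit_eq_of_forall_eq (hfS x hx) (hgS x hx) t }⟩

end Topology

end Zigzag

section Tree

variable {V : Type*} {G : SimpleGraph V} {r : V}

/-- A self-map of the vertices of a graph that fixes or contracts each edge. -/
def EdgeCollapsing (G : SimpleGraph V) (f : V → V) : Prop :=
  ∀ ⦃u v⦄, G.Adj u v → f u = f v ∨ f u = u ∧ f v = v

/-- `G` is a tree, which we regard as rooted at `r`: each vertex is the end of a unique path
starting at `r`. -/
def HasUniquePathsFrom (G : SimpleGraph V) (r : V) : Prop :=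
  ∀ v, ∃! p : G.Walk r v, p.IsPath

namespace HasUniquePathsFrom

variable (h : HasUniquePathsFrom G r) {u v : V} {n : ℕ}

/-- The path from the root to `v`. -/
noncomputable def path (v : V) : G.Walk r v :=
  (h v).choose

theorem isPath_path (v : V) : (h.path v).IsPath :=
  (h v).choose_spec.1

theorem eq_path {p : G.Walk r v} (hp : p.IsPath) : p = h.path v :=
  (h v).choose_spec.2 p hp

theorem path_root : h.path r = .nil :=
  (h.eq_path .nil).symm

theorem path_eq_concat (huv : G.Adj u v) (hv : v ∉ (h.path u).support) :
    h.path v = (h.path u).concat huv :=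
  (h.eq_path ((h.isPath_path u).concat hv huv)).symm

theorem notMem_support_path_or_of_adj (huv : G.Adj u v) :
    v ∉ (h.path u).support ∨ u ∉ (h.path v).support := by
  classical
  by_cases hv : v ∈ (h.path u).support
  · right
    rw [← h.eq_path ((h.isPath_path u).takeUntil hv)]
    exact SimpleGraph.Walk.endpoint_notMem_support_takeUntil (h.isPath_path u) hv huv.ne
  · exact .inl hv

theorem edgeCollapsing_of_forall_child {f : V → V}
    (hf : ∀ ⦃u v⦄, G.Adj u v → v ∉ (h.path u).support → f v = f u ∨ f u = u ∧ f v = v) :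
    EdgeCollapsing G f := fun u v huv => by
  rcases h.notMem_support_path_or_of_adj huv with hv | hu
  · exact (hf huv hv).imp_left Eq.symm
  · exact (hf huv.symm hu).imp_right And.symm

/-- The retraction onto the vertices of depth at most `n`, sending a deeper vertex to its ancestor
of depth `n`. -/
noncomputable def truncation (n : ℕ) (v : V) : V :=
  (h.path v).getVert n

theorem truncation_zero (v : V) : h.truncation 0 v = r :=
  (h.path v).getVert_zero

theorem truncation_of_length_le (hn : (h.path v).length ≤ n) : h.truncation n v = v :=
  (h.path v).getVert_of_length_le hn

theorem truncation_root (n : ℕ) : h.truncation n r = r :=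
  h.truncation_of_length_le (by simp [path_root])

theorem truncation_eq_of_le_length (huv : G.Adj u v) (hv : v ∉ (h.path u).support)
    (hn : n ≤ (h.path u).length) : h.truncation n v = h.truncation n u := by
  rw [truncation, h.path_eq_concat huv hv, SimpleGraph.Walk.concat_eq_append,
    SimpleGraph.Walk.getVert_append', if_pos hn, truncation]

theorem truncation_of_length_lt (huv : G.Adj u v) (hv : v ∉ (h.path u).support)
    (hn : (h.path u).length < n) : h.truncation n v = v :=
  h.truncation_of_length_le (by
    rwa [h.path_eq_concat huv hv, SimpleGraph.Walk.length_concat])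

theorem edgeCollapsing_truncation (n : ℕ) : EdgeCollapsing G (h.truncation n) :=
  h.edgeCollapsing_of_forall_child fun _ _ huv hv => by
    rcases le_or_gt n (h.path _).length with hn | hn
    · exact .inl (h.truncation_eq_of_le_length huv hv hn)
    · exact .inr ⟨h.truncation_of_length_le hn.le, h.truncation_of_length_lt huv hv hn⟩

theorem truncation_succ_eq_or_adj (n : ℕ) (v : V) :
    h.truncation (n + 1) v = h.truncation n v ∨
      G.Adj (h.truncation n v) (h.truncation (n + 1) v) := by
  rcases le_or_gt (h.path v).length n with hn | hn
  · left
    rw [h.truncation_of_length_le hn, h.truncation_of_length_le (hn.trans n.le_succ)]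
  · exact .inr ((h.path v).adj_getVert_succ hn)

section HalfTruncation

variable (s : V → V → Prop)

open Classical in
/-- The retraction intermediate between `h.truncation n` and `h.truncation (n + 1)` that keeps, of
the vertices of depth `n + 1`, those related by `s` to their parent. If `s` is a partial order this
is the minimum of the two truncations. -/
noncomputable def halfTruncation (n : ℕ) (v : V) : V :=
  if s (h.truncation (n + 1) v) (h.truncation n v) then h.truncation (n + 1) v
  else h.truncation n v

theorem halfTruncation_eq_of_eq {w : V} (hn : h.truncation n v = w)
    (hn' : h.truncation (n + 1) v = w) : h.halfTruncation s n v = w := by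
  simp [halfTruncation, hn, hn']

theorem halfTruncation_of_length_le (hn : (h.path v).length ≤ n) : h.halfTruncation s n v = v :=
  h.halfTruncation_eq_of_eq s (h.truncation_of_length_le hn)
    (h.truncation_of_length_le (hn.trans n.le_succ))

theorem halfTruncation_root (n : ℕ) : h.halfTruncation s n r = r :=
  h.halfTruncation_eq_of_eq s (h.truncation_root n) (h.truncation_root (n + 1))

theorem edgeCollapsing_halfTruncation (n : ℕ) : EdgeCollapsing G (h.halfTruncation s n) :=
  h.edgeCollapsing_of_forall_child fun u v huv hv => by
    rcases lt_trichotomy n (h.path u).length with hn | rfl | hn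
    · left
      have hsucc : h.truncation (n + 1) v = h.truncation (n + 1) u :=
        h.truncation_eq_of_le_length huv hv hn
      rw [halfTruncation, halfTruncation, h.truncation_eq_of_le_length huv hv hn.le, hsucc]
    · have hu : h.halfTruncation s (h.path u).length u = u :=
        h.halfTruncation_of_length_le s le_rfl
      have hparent : h.truncation (h.path u).length v = u :=
        (h.truncation_eq_of_le_length huv hv le_rfl).trans (h.truncation_of_length_le le_rfl)
      have hself : h.truncation ((h.path u).length + 1) v = v :=
        h.truncation_of_length_lt huv hv (Nat.lt_succ_self _)
      rw [hu, halfTruncation, hparent, hself]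
      split_ifs
      · exact .inr ⟨rfl, rfl⟩
      · exact .inl rfl
    · exact .inr ⟨h.halfTruncation_of_length_le s hn.le,
        h.halfTruncation_eq_of_eq s (h.truncation_of_length_lt huv hv hn)
          (h.truncation_of_length_lt huv hv (hn.trans n.lt_succ_self))⟩

variable {s} [Std.Refl s]

theorem halfTruncation_rel_truncation (n : ℕ) (v : V) :
    s (h.halfTruncation s n v) (h.truncation n v) := by
  unfold halfTruncation
  split_ifs with hs
  · exact hs
  · exact refl_of s _

theorem halfTruncation_rel_truncation_succ (hs : ∀ ⦃u v⦄, G.Adj u v → s u v ∨ s v u) (n : ℕ)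
    (v : V) : s (h.halfTruncation s n v) (h.truncation (n + 1) v) := by
  unfold halfTruncation
  split_ifs with hdown
  · exact refl_of s _
  · rcases h.truncation_succ_eq_or_adj n v with heq | hadj
    · exact heq ▸ refl_of s _
    · exact (hs hadj).resolve_right hdown

end HalfTruncation

end HasUniquePathsFrom

end Tree

section FiniteChains

variable {α : Type*}

theorem wellFoundedLT_of_finite_chains [Preorder α]
    (hfin : ∀ C : Set α, IsChain (· ≤ ·) C → C.Finite) : WellFoundedLT α := by
  refine ⟨wellFounded_iff_isEmpty_descending_chain.2 ⟨fun ⟨f, hf⟩ => ?_⟩⟩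
  have hanti : StrictAnti f := strictAnti_nat_of_succ_lt hf
  exact Set.infinite_range_of_injective hanti.injective (hfin _ hanti.antitone.isChain_range)

theorem reflTransGen_covBy_of_finite_chains [PartialOrder α]
    (hfin : ∀ C : Set α, IsChain (· ≤ ·) C → C.Finite) {a b : α} (hab : a ≤ b) :
    Relation.ReflTransGen (· ⋖ ·) a b := by
  have hlt : WellFoundedLT α := wellFoundedLT_of_finite_chains hfin
  have hgt : WellFoundedLT αᵒᵈ := wellFoundedLT_of_finite_chains fun C hC => hfin C hC.symm
  have := IsStronglyCoatomic.of_wellFounded_gt (α := α) hgt.wf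
  induction b using WellFoundedLT.induction with
  | ind b ih =>
    rcases hab.eq_or_lt with rfl | hlt
    · exact .refl
    · obtain ⟨c, hac, hcb⟩ := exists_le_covBy_of_lt hlt
      exact (ih c hcb.lt hac).tail hcb

end FiniteChains

section CoverGraph

variable {X : Type*} [TopologicalSpace X]

theorem specLE_iff_specializes_s14 {a b : X} : specLE a b ↔ a ⤳ b :=
  specializes_iff_mem_closure.symm

/-- The graph on the points of `X` whose edges join each point to those it covers. -/
def coverGraph (X : Type*) [TopologicalSpace X] : SimpleGraph X where
  Adj u v := specCovers u v ∨ specCovers v u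
  symm := ⟨fun _ _ => Or.symm⟩
  loopless := ⟨fun _ huu => huu.elim (·.2.1 rfl) (·.2.1 rfl)⟩

theorem specializes_or_of_coverGraph_adj {u v : X} (huv : (coverGraph X).Adj u v) :
    u ⤳ v ∨ v ⤳ u :=
  huv.imp (specLE_iff_specializes_s14.1 ·.1) (specLE_iff_specializes_s14.1 ·.1)

theorem isCoverSPath_support {x y : X} {p : (coverGraph X).Walk x y} (hp : p.IsPath) :
    IsCoverSPath p.support x y :=
  ⟨p.support_ne_nil, hp.support_nodup,
    by simp [List.head?_eq_some_head p.support_ne_nil],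
    by simp [List.getLast?_eq_some_getLast p.support_ne_nil],
    p.isChain_adj_support⟩

theorem exists_isPath_of_isCoverSPath {l : List X} {x y : X} (hl : IsCoverSPath l x y) :
    ∃ p : (coverGraph X).Walk x y, p.IsPath := by
  obtain ⟨hne, hnodup, hhead, hlast, hchain⟩ := hl
  obtain rfl : l.head hne = x := by simpa [List.head?_eq_some_head hne] using hhead
  obtain rfl : l.getLast hne = y := by simpa [List.getLast?_eq_some_getLast hne] using hlast
  have hadj : l.IsChain (coverGraph X).Adj := hchain
  refine ⟨.ofSupport l hne hadj, ?_⟩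
  rwa [SimpleGraph.Walk.isPath_def, SimpleGraph.Walk.support_ofSupport]

theorem hasUniquePathsFrom_coverGraph {x : X} (huniq : ∀ y, ∃! l : List X, IsCoverSPath l x y) :
    HasUniquePathsFrom (coverGraph X) x := fun y => by
  obtain ⟨p, hp⟩ := exists_isPath_of_isCoverSPath (huniq y).exists.choose_spec
  exact ⟨p, hp, fun q hq => SimpleGraph.Walk.ext_support <|
    (huniq y).unique (isCoverSPath_support hq) (isCoverSPath_support hp)⟩

theorem EdgeCollapsing.continuous [AlexandrovDiscrete X] {f : X → X}
    (hf : EdgeCollapsing (coverGraph X) f)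
    (hcov : ∀ a b : X, specLE a b → Relation.ReflTransGen specCovers a b) : Continuous f := by
  have hstep : ∀ a b : X, specCovers a b → f a ⤳ f b := fun a b hab => by
    rcases hf (.inl hab) with heq | ⟨ha, hb⟩
    · exact heq ▸ specializes_rfl
    · rw [ha, hb]
      exact specLE_iff_specializes_s14.1 hab.1
  have hmono : ∀ a b : X, Relation.ReflTransGen specCovers a b → f a ⤳ f b := fun a b hab => by
    induction hab with
    | refl => exact specializes_rfl
    | tail _ hbc ih => exact ih.trans (hstep _ _ hbc)
  refine continuous_def.2 fun U hU => isOpen_iff_forall_specializes.2 fun a b hab hb => ?_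
  exact (hmono a b (hcov a b (specLE_iff_specializes_s14.2 hab))).mem_open hU hb

theorem reflTransGen_specCovers_of_finite_chains [T0Space X]
    (hfin : ∀ C : Set X, (∀ a ∈ C, ∀ b ∈ C, a ≠ b → specComp a b) → C.Finite) {a b : X}
    (hab : specLE a b) : Relation.ReflTransGen specCovers a b := by
  let _ : PartialOrder X := specializationOrder X
  have hle : ∀ {a b : X}, specLE a b ↔ b ≤ a := specLE_iff_specializes_s14
  have hcov : ∀ {a b : X}, a ⋖ b → specCovers b a := fun h =>
    ⟨hle.2 h.le, h.ne', fun c hbc hca => (h.eq_or_eq (hle.1 hca) (hle.1 hbc)).symm⟩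
  have hchain : ∀ C : Set X, IsChain (· ≤ ·) C → C.Finite := fun C hC =>
    hfin C fun a ha b hb hne => (hC ha hb hne).symm.imp hle.2 hle.2
  exact Relation.reflTransGen_swap.1 <|
    Relation.ReflTransGen.mono (fun _ _ => hcov) _ _ <|
      reflTransGen_covBy_of_finite_chains hchain (hle.1 hab)

end CoverGraph

theorem stmt14_general {X : Type*} [TopologicalSpace X] [AlexandrovDiscrete X]
    (hcov : ∀ a b : X, specLE a b → Relation.ReflTransGen specCovers a b)
    (x : X) (huniq : ∀ y : X, ∃! l : List X, IsCoverSPath l x y) :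
    ∃ H : X × unitInterval → X, Continuous H ∧
      (∀ z, H (z, 0) = z) ∧ (∀ z, H (z, 1) = x) ∧ ∀ t, H (x, t) = x := by
  have h := hasUniquePathsFrom_coverGraph huniq
  have : Std.Refl (Specializes (X := X)) := ⟨fun _ => specializes_rfl⟩
  let f n : C(X, X) := ⟨h.truncation n, (h.edgeCollapsing_truncation n).continuous hcov⟩
  let g n : C(X, X) :=
    ⟨h.halfTruncation Specializes n, (h.edgeCollapsing_halfTruncation _ n).continuous hcov⟩
  obtain ⟨F⟩ : (ContinuousMap.id X).HomotopicRel (f 0) {x} := homotopicRel_of_zigzag (g := g)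
    h.halfTruncation_rel_truncation
    (h.halfTruncation_rel_truncation_succ fun _ _ => specializes_or_of_coverGraph_adj)
    (fun z => tendsto_atTop_of_eventually_const fun _ => h.truncation_of_length_le)
    (fun z => tendsto_atTop_of_eventually_const fun _ => h.halfTruncation_of_length_le _)
    (by rintro _ rfl; exact h.truncation_root) (by rintro _ rfl; exact h.halfTruncation_root _)
  exact ⟨F ∘ Prod.swap, F.continuous.comp continuous_swap, F.apply_zero,
    fun z => (F.apply_one z).trans (h.truncation_zero z), fun t => F.eq_fst t rfl⟩

/-- If `X` is a T0 Alexandroff space in which every chain is finite and `x ∈ X` is such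
that every `y ∈ X` is joined to `x` by a unique s-path in which consecutive points cover
one another, then `{x}` is a strong deformation retract of `X`. -/
theorem stmt14 {X : Type*} [TopologicalSpace X] [AlexandrovDiscrete X] [T0Space X]
    (hchain : ∀ C : Set X, (∀ a ∈ C, ∀ b ∈ C, a ≠ b → specComp a b) → C.Finite)
    (x : X) (huniq : ∀ y : X, ∃! l : List X, IsCoverSPath l x y) :
    ∃ H : X × unitInterval → X, Continuous H ∧
      (∀ z, H (z, 0) = z) ∧ (∀ z, H (z, 1) = x) ∧ ∀ t, H (x, t) = x := by
  exact stmt14_general (fun _ _ => reflTransGen_specCovers_of_finite_chains hchain) x huniq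
end

section
/- The Khalimsky half-line, i.e. the set ℕ with the partial order n ⊑ m iff n = m, or |n − m| = 1 and m is even, equipped with the Alexandroff topology whose open sets are the down-sets, is contractible. -/
/-- The Khalimsky half-line: `ℕ` carrying the Alexandroff topology of `khalimskyLE`. -/
def KhalimskyHalfLine : Type := ℕ

/-- The Alexandroff topology associated to `khalimskyLE`: open sets are the down-sets. -/
instance : TopologicalSpace KhalimskyHalfLine where
  IsOpen U := ∀ m ∈ U, ∀ n : ℕ, khalimskyLE n m → n ∈ U
  isOpen_univ := fun _ _ _ _ => trivial
  isOpen_inter := fun _ _ hU hV m hm n hnm => ⟨hU m hm.1 n hnm, hV m hm.2 n hnm⟩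
  isOpen_sUnion := fun S hS m hm n hnm => by
    obtain ⟨U, hU, hmU⟩ := hm
    exact ⟨U, hU, hS U hU m hmU n hnm⟩

/-! Truncating `x` at height `k` gives a map `min x k` that is continuous in `(x, k)`, and `k` can
be moved along the half-line by the quotient map `ℝ → ℕ` collapsing each open interval
`(n, n + 1)` to the point `2n + 1` and sending `n` to `2n`. Letting the height sink from infinity
to zero contracts the half-line onto its endpoint. This is continuous at infinite height because
there the truncation is locally the identity. -/

open Filter Topology Set unitInterval

section Homotopy

variable {X Y : Type*}

/-- The map `I × X → Y` that runs the family `F` backwards in time, from `f` (placed at time `∞`)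
to `F (a, ·)`. The time interval `[a, ∞]` is parametrised by `t ↦ t⁻¹ + (a - 1)`; `t = 0` is
treated separately because `0⁻¹ = 0` instead of `∞`. -/
noncomputable def homotopyFromInfinity (F : ℝ × X → Y) (f : X → Y) (a : ℝ) (p : I × X) : Y :=
  if p.1 = 0 then f p.2 else F ((p.1 : ℝ)⁻¹ + (a - 1), p.2)

theorem tendsto_unitInterval_inv_atTop : Tendsto (fun t : I ↦ (t : ℝ)⁻¹) (𝓝[≠] 0) atTop := by
  refine tendsto_inv_nhdsGT_zero.comp (tendsto_nhdsWithin_iff.2 ⟨?_, ?_⟩)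
  · exact (continuous_subtype_val.tendsto' (0 : I) 0 rfl).mono_left nhdsWithin_le_nhds
  · exact eventually_mem_nhdsWithin.mono fun t ht ↦ unitInterval.pos_iff_ne_zero.2 ht

variable [TopologicalSpace X]

theorem homotopyFromInfinity_eventuallyEq_zero {F : ℝ × X → Y} {f : X → Y} {x : X}
    (h : ∀ᶠ p in atTop ×ˢ 𝓝 x, F p = f p.2) (a : ℝ) :
    homotopyFromInfinity F f a =ᶠ[𝓝 (0, x)] fun p ↦ f p.2 := by
  have time_atTop : Tendsto (fun t : I ↦ (t : ℝ)⁻¹ + (a - 1)) (𝓝[≠] 0) atTop :=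
    tendsto_atTop_add_const_right _ _ tendsto_unitInterval_inv_atTop
  have agree : ∀ᶠ p : I × X in 𝓝[≠] 0 ×ˢ 𝓝 x, F ((p.1 : ℝ)⁻¹ + (a - 1), p.2) = f p.2 :=
    (time_atTop.prodMap tendsto_id).eventually h
  rw [← nhdsWithin_univ x, ← nhdsWithin_prod_eq, eventually_nhdsWithin_iff] at agree
  filter_upwards [agree] with p hp
  by_cases hp0 : p.1 = 0
  · exact if_pos hp0
  · exact (if_neg hp0).trans (hp ⟨hp0, mem_univ _⟩)

variable [TopologicalSpace Y]

theorem continuousAt_homotopyFromInfinity_of_ne_zero {F : ℝ × X → Y} (hF : Continuous F)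
    (f : X → Y) (a : ℝ) {p : I × X} (hp : p.1 ≠ 0) :
    ContinuousAt (homotopyFromInfinity F f a) p := by
  have hcont : ContinuousAt (fun q : I × X ↦ F ((q.1 : ℝ)⁻¹ + (a - 1), q.2)) p := by
    have : (p.1 : ℝ) ≠ 0 := unitInterval.coe_ne_zero.2 hp
    exact hF.continuousAt.comp (by fun_prop (disch := assumption))
  refine hcont.congr ?_
  filter_upwards [continuous_fst.continuousAt.eventually_ne hp] with q hq
  exact (if_neg hq).symm

theorem continuous_homotopyFromInfinity {F : ℝ × X → Y} (hF : Continuous F) {f : X → Y}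
    (hf : Continuous f) (h : ∀ x, ∀ᶠ p in atTop ×ˢ 𝓝 x, F p = f p.2) (a : ℝ) :
    Continuous (homotopyFromInfinity F f a) := by
  refine continuous_iff_continuousAt.2 fun ⟨t, x⟩ ↦ ?_
  by_cases ht : t = 0
  · subst ht
    exact (hf.comp continuous_snd).continuousAt.congr
      (homotopyFromInfinity_eventuallyEq_zero (h x) a).symm
  · exact continuousAt_homotopyFromInfinity_of_ne_zero hF f a ht

theorem homotopic_curry_of_eventually_eq (F : C(ℝ × X, Y)) (f : C(X, Y))
    (h : ∀ x, ∀ᶠ p in atTop ×ˢ 𝓝 x, F p = f p.2) (a : ℝ) : f.Homotopic (F.curry a) :=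
  ⟨{ toFun := homotopyFromInfinity F f a
     continuous_toFun := continuous_homotopyFromInfinity F.continuous f.continuous h a
     map_zero_left := fun _ ↦ if_pos rfl
     map_one_left := fun x ↦ by simp [homotopyFromInfinity] }⟩

end Homotopy

section Alexandroff

variable {α β : Type*} [TopologicalSpace α] [Preorder α] [Topology.IsLowerSet α]

theorem continuous_iff_eventually_le_of_isLowerSet [TopologicalSpace β] {f : β → α} :
    Continuous f ↔ ∀ b, ∀ᶠ c in 𝓝 b, f c ≤ f b := by
  simp only [continuous_iff_continuousAt, ContinuousAt, IsLowerSet.nhds_eq_principal_Iic,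
    tendsto_principal, mem_Iic]

instance isLowerSet_prod [TopologicalSpace β] [Preorder β] [Topology.IsLowerSet β] :
    Topology.IsLowerSet (α × β) :=
  Topology.isLowerSet_iff_nhds.2 fun ⟨a, b⟩ ↦ by
    rw [nhds_prod_eq, IsLowerSet.nhds_eq_principal_Iic, IsLowerSet.nhds_eq_principal_Iic,
      prod_principal_principal, Iic_prod_Iic]

end Alexandroff

section Floor

variable {R : Type*} [Semiring R] [LinearOrder R] [FloorSemiring R] [TopologicalSpace R]

theorem eventually_natFloor_le [IsStrictOrderedRing R] [ClosedIciTopology R] (r : R) :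
    ∀ᶠ s in 𝓝 r, ⌊s⌋₊ ≤ ⌊r⌋₊ := by
  filter_upwards [eventually_lt_nhds (Nat.lt_succ_floor r)] with s hs
  exact Nat.lt_succ_iff.1 ((Nat.floor_lt' (Nat.succ_ne_zero _)).2 hs)

theorem eventually_le_natCeil [ClosedIicTopology R] (r : R) : ∀ᶠ s in 𝓝 r, ⌈r⌉₊ ≤ ⌈s⌉₊ := by
  cases hn : ⌈r⌉₊ with
  | zero => exact Eventually.of_forall fun s ↦ Nat.zero_le _
  | succ n =>
    have hnr : (n : R) < r := Nat.lt_ceil.1 (hn ▸ Nat.lt_succ_self n)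
    exact (eventually_gt_nhds hnr).mono fun s hs ↦ Nat.lt_ceil.2 hs

end Floor

namespace khalimskyLE

protected theorem trans {l m n : ℕ} (hlm : khalimskyLE l m) (hmn : khalimskyLE m n) :
    khalimskyLE l n := by
  simp only [khalimskyLE, Nat.even_iff] at *
  omega

protected theorem antisymm {m n : ℕ} (hmn : khalimskyLE m n) (hnm : khalimskyLE n m) : m = n := by
  simp only [khalimskyLE, Nat.even_iff] at *
  omega

theorem le_add_one {m n : ℕ} (h : khalimskyLE m n) : m ≤ n + 1 := by
  simp only [khalimskyLE] at h
  omega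

protected theorem min {k l m n : ℕ} (hkm : khalimskyLE k m) (hln : khalimskyLE l n) :
    khalimskyLE (min k l) (min m n) := by
  -- If `m < n`, then `m ≤ l`, so `min k l` is `k` or `m`.
  simp only [khalimskyLE, Nat.even_iff] at *
  omega

theorem add_of_nested {a b c d : ℕ} (hca : c ≤ a) (hab : a ≤ b) (hbd : b ≤ d)
    (hdc : d ≤ c + 1) : khalimskyLE (c + d) (a + b) := by
  -- If `a < b`, then `c = a` and `d = b`; otherwise `a + b` is even.
  simp only [khalimskyLE, Nat.even_iff]
  omega

end khalimskyLE

namespace KhalimskyHalfLine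

instance : PartialOrder KhalimskyHalfLine where
  le := khalimskyLE
  le_refl _ := Or.inl rfl
  le_trans _ _ _ := khalimskyLE.trans
  le_antisymm _ _ := khalimskyLE.antisymm

instance : Topology.IsLowerSet KhalimskyHalfLine where
  topology_eq_lowerSetTopology := by
    ext U
    exact ⟨fun hU m n hnm hm ↦ hU m hm n hnm, fun hU m hm n hnm ↦ hU hnm hm⟩

/-- The truncation of `x` at height `k`: the minimum of `x` and `k` as natural numbers, which is
not their infimum for the order of the half-line. -/
def truncate (x k : KhalimskyHalfLine) : KhalimskyHalfLine := Nat.min x k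

theorem continuous_truncate : Continuous fun p : KhalimskyHalfLine × KhalimskyHalfLine ↦
    truncate p.1 p.2 :=
  IsLowerSet.monotone_iff_continuous.1 fun _ _ h ↦
    have ⟨hx, hk⟩ := Prod.le_def.1 h
    khalimskyLE.min hx hk

/-- The quotient map from the real half-line to the Khalimsky half-line, sending `n` to `2 * n`
and the interval `(n, n + 1)` to `2 * n + 1`. Negative reals are sent to `0`. -/
noncomputable def ofReal (r : ℝ) : KhalimskyHalfLine := (⌊r⌋₊ + ⌈r⌉₊ : ℕ)

theorem continuous_ofReal : Continuous ofReal := by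
  refine continuous_iff_eventually_le_of_isLowerSet.2 fun r ↦ ?_
  filter_upwards [eventually_natFloor_le r, eventually_le_natCeil r] with s hfloor hceil
  exact khalimskyLE.add_of_nested hfloor (Nat.floor_le_ceil r) hceil (Nat.ceil_le_floor_add_one s)

/-- The continuous family of truncations of the half-line, at height `ofReal r` for the
parameter `r`. -/
noncomputable def truncateReal : C(ℝ × KhalimskyHalfLine, KhalimskyHalfLine) where
  toFun p := truncate p.2 (ofReal p.1)
  continuous_toFun :=
    continuous_truncate.comp (continuous_snd.prodMk (continuous_ofReal.comp continuous_fst))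

theorem truncateReal_eq_self {m : ℕ} {r : ℝ} (h : (m : ℝ) ≤ r) :
    truncateReal (r, (m : KhalimskyHalfLine)) = m :=
  Nat.min_eq_left ((Nat.le_floor h).trans (Nat.le_add_right _ _))

theorem ofReal_zero : ofReal 0 = (0 : ℕ) := by
  rw [ofReal, Nat.floor_zero, Nat.ceil_zero]

theorem curry_truncateReal_zero : truncateReal.curry 0 = ContinuousMap.const _ (ofReal 0) := by
  ext x
  change truncate x (ofReal 0) = ofReal 0
  rw [ofReal_zero]
  exact Nat.min_zero x

theorem eventually_truncateReal_eq_self (x : KhalimskyHalfLine) :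
    ∀ᶠ p in atTop ×ˢ 𝓝 x, truncateReal p = p.2 := by
  have near : ∀ᶠ y in 𝓝 x, y ≤ x := by
    rw [IsLowerSet.nhds_eq_principal_Iic]
    exact mem_principal_self _
  filter_upwards [(eventually_ge_atTop ((Nat.succ x : ℕ) : ℝ)).prod_mk near] with p ⟨hr, hy⟩
  exact truncateReal_eq_self ((Nat.cast_le.2 (khalimskyLE.le_add_one hy)).trans hr)

end KhalimskyHalfLine

/-- The Khalimsky half-line is contractible. -/
theorem stmt15 : ContractibleSpace KhalimskyHalfLine := by
  have contraction : (ContinuousMap.id KhalimskyHalfLine).Homotopic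
      (KhalimskyHalfLine.truncateReal.curry 0) :=
    homotopic_curry_of_eventually_eq _ _ KhalimskyHalfLine.eventually_truncateReal_eq_self 0
  rw [KhalimskyHalfLine.curry_truncateReal_zero] at contraction
  exact (contractible_iff_id_nullhomotopic _).2 ⟨_, contraction⟩
end

section
/- Let X and Y be T0 Alexandroff spaces in which every s-path is finite (fp-spaces), and suppose X^C ⊆ X and Y^C ⊆ Y are subspaces that are C-cores and are strong deformation retracts of X and Y respectively. Then X is homotopy equivalent to Y if and only if X^C is homeomorphic to Y^C. -/
/-- `X` is an fp-space: every s-path (sequence of pairwise distinct points with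
consecutive points comparable) is finite, i.e. there is no infinite s-path. -/
def NoInfiniteSPath (X : Type*) [TopologicalSpace X] : Prop :=
  ¬ ∃ p : ℕ → X, Function.Injective p ∧ ∀ n, specComp (p n) (p (n + 1))

/-- `X` is a C-core: its only comparative retraction is the identity. -/
def IsCCore (X : Type*) [TopologicalSpace X] : Prop :=
  ∀ r : X → X, Continuous r → r ∘ r = r → (∀ x, specComp (r x) x) → r = id

/-- `A` is a strong deformation retract of `X`. -/
def IsSDR {X : Type*} [TopologicalSpace X] (A : Set X) : Prop :=
  ∃ H : X × unitInterval → X, Continuous H ∧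
    (∀ z, H (z, 0) = z) ∧ (∀ z, H (z, 1) ∈ A) ∧ ∀ a ∈ A, ∀ t, H (a, t) = a

/-!
A C-core is rigid: a homotopy `F` starting at the identity of an fp-space which is a C-core never
moves a point. A C-core has no beat points, since pushing a beat point `x` to the point it is beaten
by would be a comparative retraction. Let `x` be a point moved by `F`.

* If `x` rests on `[0, t)` and jumps at time `t`, then by continuity it jumps to some `y > x`. As
  `y` does not beat `x`, some `z > x` does not lie above `y`, and by monotonicity `z` has moved by
  time `t` as well.
* If `x` rests on `[0, t]` and moves right after `t`, then it moves to points below `x`. If all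
  points below `x` rested near `t`, a maximal `y < x` would satisfy `y ≤ F (s, x) < x` for suitable
  `s` near `t`, so that `F (s, x) = y`, and likewise `z ≤ F (s, x)` for each `z < x`: then `y` would
  beat `x`. So some `z < x` starts moving no later than `x`.

Along the sequence of moved points obtained in this way, the interval of rest never grows; while it
stays the same, the sequence is strictly increasing in the first case and strictly decreasing in
the second one. It is therefore an infinite s-path, which does not exist.

Consequently, mutually inverse homotopy equivalences between two such spaces are inverse
homeomorphisms.
-/

open Topology

section Comparability

variable {X Y : Type*} [TopologicalSpace X] [TopologicalSpace Y]

lemma specComp_iff_specializes {x y : X} : specComp x y ↔ x ⤳ y ∨ y ⤳ x := by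
  simp only [specComp, specLE, specializes_iff_mem_closure]

lemma specComp.map {x y : X} (h : specComp x y) {f : X → Y} (hf : Continuous f) :
    specComp (f x) (f y) :=
  specComp_iff_specializes.2 <|
    (specComp_iff_specializes.1 h).imp (fun hxy => hxy.map hf) (fun hyx => hyx.map hf)

lemma NoInfiniteSPath.of_injective (hY : NoInfiniteSPath Y) {f : X → Y} (hf : Continuous f)
    (hinj : Function.Injective f) : NoInfiniteSPath X :=
  fun ⟨p, hp, hcomp⟩ => hY ⟨f ∘ p, hinj.comp hp, fun n => (hcomp n).map hf⟩

lemma NoInfiniteSPath.wellFounded (hX : NoInfiniteSPath X) (r : X → X → Prop) [IsStrictOrder X r] :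
    WellFounded fun y x => r y x ∧ specComp y x := by
  rw [wellFounded_iff_isEmpty_descending_chain]
  exact ⟨fun ⟨p, hp⟩ => hX ⟨p, (RelEmbedding.natGT p fun n => (hp n).1).injective,
    fun n => (hp n).2.symm⟩⟩

lemma NoInfiniteSPath.exists_extremal_of_rank [T0Space X] (hX : NoInfiniteSPath X) {ι : Type*}
    [PartialOrder ι] (rank : X → ι) (p : ι → Prop) {s : Set X} (hs : s.Nonempty) :
    ∃ x ∈ s, (p (rank x) → ∀ z ∈ s, x ⤳ z → rank z ≤ rank x → z = x) ∧
      (¬ p (rank x) → ∀ z ∈ s, z ⤳ x → rank z ≤ rank x → z = x) := by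
  classical
  let := specializationOrder X
  -- In Mathlib's order, `y < x` means `x ⤳ y` and `y ≠ x`.
  let tie (i : ι) : X → X → Prop := if p i then (· < ·) else (· > ·)
  have (i : ι) : IsStrictOrder X (tie i) := by
    by_cases hi : p i <;> simp only [tie, hi, if_true, if_false] <;> infer_instance
  let r (z x : X) : Prop := rank z < rank x ∨ rank z = rank x ∧ tie (rank x) z x
  have : IsStrictOrder X r :=
    { irrefl := fun x hx => hx.elim (lt_irrefl _) fun h => irrefl x h.2
      trans := by
        rintro a b c (hab | ⟨hab, tab⟩) (hbc | ⟨hbc, tbc⟩)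
        · exact Or.inl (hab.trans hbc)
        · exact Or.inl (hbc ▸ hab)
        · exact Or.inl (hab ▸ hbc)
        · exact Or.inr ⟨hab.trans hbc, _root_.trans (hbc ▸ tab) tbc⟩ }
  obtain ⟨x, hx, hmin⟩ := (hX.wellFounded r).has_min s hs
  refine ⟨x, hx, fun hp z hz hxz hle => ?_, fun hp z hz hzx hle => ?_⟩ <;> by_contra hne
  · refine hmin z hz ⟨hle.lt_or_eq.imp_right fun heq => ⟨heq, ?_⟩,
      specComp_iff_specializes.2 (Or.inr hxz)⟩
    simpa only [tie, if_pos hp] using lt_of_le_of_ne (a := z) (b := x) hxz hne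
  · refine hmin z hz ⟨hle.lt_or_eq.imp_right fun heq => ⟨heq, ?_⟩,
      specComp_iff_specializes.2 (Or.inl hzx)⟩
    simpa only [tie, if_neg hp] using lt_of_le_of_ne (a := x) (b := z) hzx (Ne.symm hne)

lemma NoInfiniteSPath.exists_maximal_specializes [T0Space X] (hX : NoInfiniteSPath X) {s : Set X}
    (hs : s.Nonempty) : ∃ x ∈ s, ∀ z ∈ s, x ⤳ z → z = x := by
  simpa using hX.exists_extremal_of_rank (fun _ => ()) (fun _ => True) hs

end Comparability

section CCore

variable {X : Type*} [TopologicalSpace X]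

open Classical in
lemma IsCCore.not_continuous_update_id (hc : IsCCore X) {x y : X} (hne : y ≠ x)
    (hcomp : specComp y x) : ¬ Continuous (Function.update id x y) := by
  intro hcont
  have hid : Function.update id x y = id := by
    refine hc _ hcont (funext fun z => ?_) fun z => ?_
    · by_cases hz : z = x <;> simp [hz, hne]
    · by_cases hz : z = x
      · simpa [hz] using hcomp
      · simpa [hz] using specComp_iff_specializes.2 (Or.inl (specializes_refl z))
  exact hne (by simpa using congrFun hid x)

variable [AlexandrovDiscrete X]

lemma continuous_of_forall_specializes_s18 {Y : Type*} [TopologicalSpace Y] {f : X → Y}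
    (hf : ∀ x y, x ⤳ y → f x ⤳ f y) : Continuous f :=
  continuous_def.2 fun _ hs =>
    isOpen_iff_forall_specializes.2 fun x y hxy hy => (hf x y hxy).mem_open hs hy

lemma eventually_specializes {T : Type*} [TopologicalSpace T] {f : T → X} {t : T}
    (hf : ContinuousAt f t) : ∀ᶠ s in 𝓝 t, f s ⤳ f t :=
  (hf.eventually (isOpen_nhdsKer.mem_nhds (mem_nhdsKer_singleton.2 specializes_rfl))).mono
    fun _ hs => mem_nhdsKer_singleton.1 hs

open Classical in
lemma continuous_update_id {x y : X} (hbelow : ∀ z ≠ x, z ⤳ x → z ⤳ y)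
    (habove : ∀ z ≠ x, x ⤳ z → y ⤳ z) : Continuous (Function.update id x y) := by
  refine continuous_of_forall_specializes_s18 fun a b hab => ?_
  by_cases ha : a = x <;> by_cases hb : b = x
  · simp [ha, hb, specializes_rfl]
  · simpa [ha, hb] using habove b hb (ha ▸ hab)
  · simpa [ha, hb] using hbelow a ha (hb ▸ hab)
  · simpa [ha, hb] using hab

lemma IsCCore.t0Space (hc : IsCCore X) : T0Space X := by
  refine ⟨fun x y hxy => by_contra fun hne => ?_⟩
  exact hc.not_continuous_update_id (Ne.symm hne)
    (specComp_iff_specializes.2 (Or.inl hxy.specializes'))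
    (continuous_update_id (fun _ _ hz => hz.trans hxy.specializes)
      (fun _ _ hz => hxy.specializes'.trans hz))

lemma IsCCore.exists_above_not_above (hc : IsCCore X) {x y : X} (hxy : x ⤳ y) (hne : y ≠ x) :
    ∃ z ≠ x, x ⤳ z ∧ ¬ y ⤳ z := by
  by_contra! h
  exact hc.not_continuous_update_id hne (specComp_iff_specializes.2 (Or.inr hxy))
    (continuous_update_id (fun _ _ hz => hz.trans hxy) h)

lemma IsCCore.exists_below_not_below (hc : IsCCore X) {x y : X} (hyx : y ⤳ x) (hne : y ≠ x) :
    ∃ z ≠ x, z ⤳ x ∧ ¬ z ⤳ y := by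
  by_contra! h
  exact hc.not_continuous_update_id hne (specComp_iff_specializes.2 (Or.inl hyx))
    (continuous_update_id h (fun _ _ hz => hyx.trans hz))

lemma IsCCore.exists_above_map_ne (hc : IsCCore X) {f : X → X} (hf : Continuous f) {x : X}
    (hle : x ⤳ f x) (hne : f x ≠ x) : ∃ z ≠ x, x ⤳ z ∧ f z ≠ z := by
  obtain ⟨z, hzx, hxz, hnot⟩ := hc.exists_above_not_above hle hne
  exact ⟨z, hzx, hxz, fun hfix => hnot (hfix ▸ hxz.map hf)⟩

lemma IsCCore.exists_below_frequently_map_ne (hc : IsCCore X) (hX : NoInfiniteSPath X)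
    {ι : Type*} {l : Filter ι} {f : ι → X → X} (hf : ∀ i, Continuous (f i)) {x : X}
    (hle : ∀ᶠ i in l, f i x ⤳ x) (hne : ∃ᶠ i in l, f i x ≠ x) :
    ∃ z ≠ x, z ⤳ x ∧ ∃ᶠ i in l, f i z ≠ z := by
  have := hc.t0Space
  by_contra! hfix
  have hbelow : {y | y ⤳ x ∧ y ≠ x}.Nonempty :=
    let ⟨i, hi⟩ := (hle.and_frequently hne).exists
    ⟨f i x, hi⟩
  obtain ⟨y, ⟨hyx, hyne⟩, hmax⟩ := hX.exists_maximal_specializes hbelow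
  obtain ⟨z, hzne, hzx, hzy⟩ := hc.exists_below_not_below hyx hyne
  obtain ⟨i, ⟨⟨hix, hiy⟩, hiz⟩, hine⟩ :=
    (((hle.and (hfix y hyne hyx)).and (hfix z hzne hzx)).and_frequently hne).exists
  have hyi : y ⤳ f i x := by simpa only [hiy] using hyx.map (hf i)
  have hzi : z ⤳ f i x := by simpa only [hiz] using hzx.map (hf i)
  exact hzy (hmax (f i x) ⟨hix, hine⟩ hyi ▸ hzi)

end CCore

section Rigidity

variable {X : Type*} [TopologicalSpace X] {f : C(X, X)}

/-- The initial segment of times during which the homotopy `F` leaves `x` in place. Unlike its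
supremum `t`, it tells a point which has moved by time `t` from one which moves right after `t`:
the segment is `[0, t)` in the first case and `[0, t]` in the second one. -/
def restTimes (F : (ContinuousMap.id X).Homotopy f) (x : X) : LowerSet unitInterval where
  carrier := {t | ∀ s ≤ t, F (s, x) = x}
  lower' := fun _ _ hle hrest s hs => hrest s (hs.trans hle)

variable {F : (ContinuousMap.id X).Homotopy f} {x : X} {t : unitInterval}

lemma apply_of_mem_restTimes (ht : t ∈ restTimes F x) : F (t, x) = x :=
  ht t le_rfl

lemma restTimes_ne_top_of_apply_ne (hne : f x ≠ x) : restTimes F x ≠ ⊤ := by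
  intro htop
  have hrest : (1 : unitInterval) ∈ restTimes F x := htop ▸ LowerSet.mem_top
  exact hne (by simpa using apply_of_mem_restTimes hrest)

lemma zero_mem_restTimes : 0 ∈ restTimes F x := by
  intro s hs
  rw [le_antisymm hs bot_le, F.apply_zero, ContinuousMap.id_apply]

lemma exists_frequently_ne_of_not_isOpen_restTimes
    (hopen : ¬ IsOpen (restTimes F x : Set unitInterval)) :
    ∃ t ∈ restTimes F x, ∃ᶠ s in 𝓝 t, F (s, x) ≠ x := by
  contrapose! hopen
  refine isOpen_iff_mem_nhds.2 fun t ht => ?_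
  have hfix : ∀ᶠ s in 𝓝 t, Set.Icc t s ⊆ {u | F (u, x) = x} :=
    (tendsto_const_nhds.Icc Filter.tendsto_id).eventually
      (Filter.eventually_smallSets_subset.2 (hopen t ht))
  filter_upwards [hfix] with s hs u hus
  exact (le_total u t).elim (ht u) fun htu => hs ⟨htu, hus⟩

variable [AlexandrovDiscrete X]

lemma exists_jump_of_isOpen_restTimes (hmoves : restTimes F x ≠ ⊤)
    (hopen : IsOpen (restTimes F x : Set unitInterval)) :
    ∃ t, x ⤳ F (t, x) ∧ F (t, x) ≠ x ∧ ∀ s < t, s ∈ restTimes F x := by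
  have hnotClosed : ¬ IsClosed (restTimes F x : Set unitInterval) := fun hclosed =>
    hmoves (SetLike.coe_injective (IsClopen.eq_univ ⟨hclosed, hopen⟩ ⟨0, zero_mem_restTimes⟩))
  obtain ⟨t, htcl, ht⟩ := Set.not_subset.1 (mt isClosed_of_closure_subset hnotClosed)
  have hrest : ∀ s < t, s ∈ restTimes F x := by
    intro s hst
    obtain ⟨u, hu, hsu⟩ :=
      ((mem_closure_iff_frequently.1 htcl).and_eventually (eventually_gt_nhds hst)).exists
    exact (restTimes F x).lower hsu.le hu
  refine ⟨t, ?_, fun hfix => ht fun s hst => ?_, hrest⟩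
  · obtain ⟨s, hs, hspec⟩ := ((mem_closure_iff_frequently.1 htcl).and_eventually
      (eventually_specializes (f := fun s => F (s, x)) (by fun_prop))).exists
    simpa only [apply_of_mem_restTimes hs] using hspec
  · rcases hst.lt_or_eq with hlt | rfl
    · exact apply_of_mem_restTimes (hrest s hlt)
    · exact hfix

lemma IsCCore.exists_above_restTimes_le (hc : IsCCore X) (hmoves : restTimes F x ≠ ⊤)
    (hopen : IsOpen (restTimes F x : Set unitInterval)) :
    ∃ z ≠ x, x ⤳ z ∧ restTimes F z ≤ restTimes F x := by
  obtain ⟨t, hle, hne, hrest⟩ := exists_jump_of_isOpen_restTimes hmoves hopen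
  obtain ⟨z, hzx, hxz, hz⟩ := hc.exists_above_map_ne (f := fun y => F (t, y)) (by fun_prop) hle hne
  exact ⟨z, hzx, hxz, fun s hs => hrest s (not_le.1 fun hts => hz (hs t hts))⟩

lemma IsCCore.exists_below_restTimes_le (hc : IsCCore X) (hX : NoInfiniteSPath X)
    (hopen : ¬ IsOpen (restTimes F x : Set unitInterval)) :
    ∃ z ≠ x, z ⤳ x ∧ restTimes F z ≤ restTimes F x := by
  obtain ⟨t, ht, hfreq⟩ := exists_frequently_ne_of_not_isOpen_restTimes hopen
  have hle : ∀ᶠ s in 𝓝 t, F (s, x) ⤳ x := by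
    simpa only [apply_of_mem_restTimes ht] using
      eventually_specializes (f := fun s => F (s, x)) (t := t) (by fun_prop)
  obtain ⟨z, hne, hzx, hz⟩ := hc.exists_below_frequently_map_ne hX
    (f := fun s y => F (s, y)) (fun s => by fun_prop) hle hfreq
  refine ⟨z, hne, hzx, fun u hu => (restTimes F x).lower (not_lt.1 fun htu => hz ?_) ht⟩
  filter_upwards [eventually_lt_nhds htu] with s hsu
  exact not_not.2 (hu s hsu.le)

theorem IsCCore.eq_id_of_homotopic (hc : IsCCore X) (hX : NoInfiniteSPath X)
    (hf : (ContinuousMap.id X).Homotopic f) : f = ContinuousMap.id X := by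
  obtain ⟨F⟩ := hf
  have := hc.t0Space
  by_contra hmoved
  obtain ⟨x₀, hx₀⟩ := DFunLike.ne_iff.1 hmoved
  obtain ⟨x, hx, hmax, hmin⟩ := hX.exists_extremal_of_rank (restTimes F)
    (fun S => IsOpen (S : Set unitInterval)) (s := {x | restTimes F x ≠ ⊤})
    ⟨x₀, restTimes_ne_top_of_apply_ne hx₀⟩
  by_cases hopen : IsOpen (restTimes F x : Set unitInterval)
  · obtain ⟨z, hne, hxz, hle⟩ := hc.exists_above_restTimes_le hx hopen
    exact hne (hmax hopen z (ne_top_of_le_ne_top hx hle) hxz hle)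
  · obtain ⟨z, hne, hzx, hle⟩ := hc.exists_below_restTimes_le hX hopen
    exact hne (hmin hopen z (ne_top_of_le_ne_top hx hle) hzx hle)

end Rigidity

section HomotopyEquiv

open scoped ContinuousMap

variable {X Y A B : Type*} [TopologicalSpace X] [TopologicalSpace Y] [TopologicalSpace A]
  [TopologicalSpace B]

lemma IsSDR.nonempty_homotopyEquiv {C : Set X} (hC : IsSDR C) : Nonempty (X ≃ₕ C) := by
  obtain ⟨H, hH, hzero, hone, hfix⟩ := hC
  let retraction : C(X, C) := ⟨fun x => ⟨H (x, 1), hone x⟩, by fun_prop⟩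
  let inclusion : C(C, X) := ⟨Subtype.val, continuous_subtype_val⟩
  have hdeform : (ContinuousMap.id X).Homotopic (inclusion.comp retraction) :=
    ⟨⟨⟨fun p => H (p.2, p.1), by fun_prop⟩, hzero, fun _ => rfl⟩⟩
  have hretract : retraction.comp inclusion = ContinuousMap.id C :=
    ContinuousMap.ext fun c => Subtype.ext (hfix c c.2 1)
  exact ⟨⟨retraction, inclusion, hdeform.symm, hretract ▸ .refl _⟩⟩

lemma IsCCore.nonempty_homeomorph_of_homotopyEquiv [AlexandrovDiscrete A] [AlexandrovDiscrete B]
    (hAc : IsCCore A) (hBc : IsCCore B) (hA : NoInfiniteSPath A) (hB : NoInfiniteSPath B)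
    (e : A ≃ₕ B) : Nonempty (A ≃ₜ B) :=
  ⟨{ toFun := e
     invFun := e.symm
     left_inv := DFunLike.congr_fun (hAc.eq_id_of_homotopic hA e.left_inv.symm)
     right_inv := DFunLike.congr_fun (hBc.eq_id_of_homotopic hB e.right_inv.symm)
     continuous_toFun := e.toFun.continuous
     continuous_invFun := e.invFun.continuous }⟩

theorem stmt18_general [AlexandrovDiscrete A] [AlexandrovDiscrete B]
    (hA : NoInfiniteSPath A) (hB : NoInfiniteSPath B) (hAc : IsCCore A) (hBc : IsCCore B)
    (hXA : Nonempty (X ≃ₕ A)) (hYB : Nonempty (Y ≃ₕ B)) :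
    Nonempty (X ≃ₕ Y) ↔ Nonempty (A ≃ₜ B) := by
  obtain ⟨eX⟩ := hXA
  obtain ⟨eY⟩ := hYB
  constructor
  · rintro ⟨e⟩
    exact hAc.nonempty_homeomorph_of_homotopyEquiv hBc hA hB ((eX.symm.trans e).trans eY)
  · rintro ⟨e⟩
    exact ⟨(eX.trans e.toHomotopyEquiv).trans eY.symm⟩

end HomotopyEquiv

/-- If `X`, `Y` are T0 Alexandroff fp-spaces with subspaces `X^C ⊆ X`, `Y^C ⊆ Y` that are
C-cores and strong deformation retracts, then `X` and `Y` are homotopy equivalent iff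
`X^C` and `Y^C` are homeomorphic. -/
theorem stmt18 {X Y : Type*} [TopologicalSpace X] [AlexandrovDiscrete X] [T0Space X]
    [TopologicalSpace Y] [AlexandrovDiscrete Y] [T0Space Y]
    (hX : NoInfiniteSPath X) (hY : NoInfiniteSPath Y)
    (XC : Set X) (YC : Set Y) (hXc : IsCCore ↥XC) (hYc : IsCCore ↥YC)
    (hXr : IsSDR XC) (hYr : IsSDR YC) :
    Nonempty (ContinuousMap.HomotopyEquiv X Y) ↔ Nonempty (↥XC ≃ₜ ↥YC) :=
  stmt18_general (hX.of_injective continuous_subtype_val Subtype.val_injective)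
    (hY.of_injective continuous_subtype_val Subtype.val_injective) hXc hYc
    hXr.nonempty_homotopyEquiv hYr.nonempty_homotopyEquiv
end
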